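/- arXiv:2009.10102 — 7 statements merged into one kernel-verified Lean document; each statement's English description precedes it below -/
import Mathlib

section
/- Let n ≥ 2, let A be a symmetric n×n real matrix and let e ∈ ℝⁿ. Then |e|⁴·|A|² ≥ 2|e|²·|Ae|² + (|e|²·tr(A) − ⟨e, Ae⟩)²/(n−1) − ⟨e, Ae⟩², where |A| denotes the Hilbert–Schmidt (Frobenius) norm of A, |e| the Euclidean norm, and ⟨·,·⟩ the Euclidean inner product. -/
/-!
Suppose `e ≠ 0`, put `s = |e|²`, `v = Ae`, `q = ⟨e, Ae⟩`, and let `P = 1 - e eᵀ / s` be the orthogonal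
projection onto the complement of `e`. The compression `B = P A P` satisfies
`s² |B|² = s² |A|² - 2 s |Ae|² + q²` and `s tr B = s tr A - q`, so the claim is
`|B|² ≥ (tr B)² / (n - 1)`. This is the Cauchy–Schwarz inequality `(tr (B P))² ≤ |B|² |P|²`
(`|P|² = n - 1`), obtained here by expanding `0 ≤ |s (B - t P)|²` at the optimal `t = tr B / (n - 1)`.
The expansion is carried out one row at a time in `sum_sq_row`.
-/

/-- The squared norm of one row of `s A - e vᵀ - v eᵀ + c e eᵀ - d I`, where `v = Ae`: here `a` is a
row of `A`, `i` its index, and `x`, `y` are the entries of `e` and `v` at `i`. -/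
lemma sum_sq_row {n : ℕ} (a e v : Fin n → ℝ) (i : Fin n) (x y s c d : ℝ)
    (hx : e i = x) (hy : v i = y) (hs : ∑ j, e j ^ 2 = s) (ha : ∑ j, a j * e j = y) :
    ∑ j, (s * a j - x * v j - y * e j + c * (x * e j) - if i = j then d else 0) ^ 2
      = s ^ 2 * ∑ j, a j ^ 2 + x ^ 2 * ∑ j, v j ^ 2 + y ^ 2 * s + c ^ 2 * x ^ 2 * s + d ^ 2
        - 2 * s * x * ∑ j, a j * v j - 2 * s * y ^ 2 + 2 * s * c * x * y - 2 * s * d * a i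
        + 2 * x * y * ∑ j, e j * v j - 2 * c * x ^ 2 * ∑ j, e j * v j - 2 * c * x * y * s
        + 4 * d * x * y - 2 * c * d * x ^ 2 := by
  have key : ∀ j, (s * a j - x * v j - y * e j + c * (x * e j) - if i = j then d else 0) ^ 2
      = s ^ 2 * a j ^ 2 + x ^ 2 * v j ^ 2 + (c * x - y) ^ 2 * e j ^ 2
        - 2 * s * x * (a j * v j) + 2 * s * (c * x - y) * (a j * e j)
        - 2 * x * (c * x - y) * (e j * v j)
        + (if i = j then d ^ 2 - 2 * d * (s * a j - x * v j - y * e j + c * (x * e j)) else 0) := by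
    intro j
    split_ifs <;> ring
  simp only [key, Finset.sum_add_distrib, Finset.sum_sub_distrib, ← Finset.mul_sum,
    Finset.sum_ite_eq, Finset.mem_univ, if_true, hs, ha, hx, hy]
  ring

/-- For `n ≥ 2`, a symmetric `n × n` real matrix `A` and a vector `e ∈ ℝⁿ`,
`|e|⁴ |A|² ≥ 2 |e|² |Ae|² + (|e|² tr A − ⟨e, Ae⟩)² / (n − 1) − ⟨e, Ae⟩²`,
where `|A|` is the Frobenius (Hilbert–Schmidt) norm. -/
theorem matrix_inequality (n : ℕ) (hn : 2 ≤ n)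
    (A : Matrix (Fin n) (Fin n) ℝ) (hA : A.IsSymm) (e : Fin n → ℝ) :
    (∑ i, e i ^ 2) ^ 2 * (∑ i, ∑ j, A i j ^ 2) ≥
      2 * (∑ i, e i ^ 2) * (∑ i, (A.mulVec e i) ^ 2)
        + ((∑ i, e i ^ 2) * A.trace - ∑ i, e i * A.mulVec e i) ^ 2 / ((n : ℝ) - 1)
        - (∑ i, e i * A.mulVec e i) ^ 2 := by
  have hn' : (0 : ℝ) < (n : ℝ) - 1 := by
    have : (2 : ℝ) ≤ n := by exact_mod_cast hn
    linarith
  by_cases he : e = 0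
  · subst he
    simp
  have hspos : 0 < ∑ i, e i ^ 2 := by
    obtain ⟨i, hi⟩ := Function.ne_iff.mp he
    exact Finset.sum_pos' (fun i _ => sq_nonneg _) ⟨i, Finset.mem_univ _, by have : e i ≠ 0 := hi; positivity⟩
  have hrow : ∀ i, ∑ j, A i j * e j = A.mulVec e i := fun i => rfl
  -- Symmetry of `A` enters here: `⟨e, A (Ae)⟩ = |Ae|²`.
  have hAv : ∑ i, e i * ∑ j, A i j * A.mulVec e j = ∑ i, (A.mulVec e i) ^ 2 := by
    simp only [Finset.mul_sum]
    rw [Finset.sum_comm]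
    refine Finset.sum_congr rfl fun j _ => ?_
    rw [sq, ← hrow j, Finset.sum_mul]
    refine Finset.sum_congr rfl fun i _ => ?_
    rw [hA.apply i j]
    ring
  have htr : A.trace = ∑ i, A i i := rfl
  rw [htr]
  generalize hv : A.mulVec e = v at *
  generalize hs : ∑ i, e i ^ 2 = s at *
  have hexp : ∀ c d : ℝ, 0 ≤ s ^ 2 * (∑ i, ∑ j, A i j ^ 2) - 2 * s * ∑ i, v i ^ 2
      + c ^ 2 * s ^ 2 + d ^ 2 * n - 2 * s * c * ∑ i, e i * v i
      - 2 * s * d * ∑ i, A i i + 2 * (∑ i, e i * v i) ^ 2 + 4 * d * ∑ i, e i * v i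
      - 2 * c * d * s := by
    intro c d
    have h0 : 0 ≤ ∑ i, ∑ j, (s * A i j - e i * v j - v i * e j + c * (e i * e j)
        - if i = j then d else 0) ^ 2 :=
      Finset.sum_nonneg fun i _ => Finset.sum_nonneg fun j _ => sq_nonneg _
    have h1 : ∀ i, _ := fun i =>
      sum_sq_row (A i) e v i (e i) (v i) s c d rfl rfl hs (hrow i)
    have h2 : ∑ i, ∑ j, (s * A i j - e i * v j - v i * e j + c * (e i * e j)
        - if i = j then d else 0) ^ 2
        = ∑ i, (s ^ 2 * (∑ j, A i j ^ 2) + (∑ j, v j ^ 2) * e i ^ 2 + s * v i ^ 2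
          + c ^ 2 * s * e i ^ 2 + d ^ 2 - 2 * s * (e i * ∑ j, A i j * v j)
          - 2 * s * v i ^ 2 + 2 * s * c * (e i * v i) - 2 * s * d * A i i
          + 2 * (∑ j, e j * v j) * (e i * v i) - 2 * c * (∑ j, e j * v j) * e i ^ 2
          - 2 * c * s * (e i * v i) + 4 * d * (e i * v i) - 2 * c * d * e i ^ 2) := by
      refine Finset.sum_congr rfl fun i _ => ?_
      rw [h1 i]
      ring
    rw [h2] at h0
    simp only [Finset.sum_add_distrib, Finset.sum_sub_distrib, ← Finset.mul_sum, hs, hAv,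
      Finset.sum_const, Finset.card_univ, Fintype.card_fin, nsmul_eq_mul] at h0
    linarith
  generalize ∑ i, ∑ j, A i j ^ 2 = F at *
  generalize ∑ i, v i ^ 2 = V at *
  generalize ∑ i, e i * v i = q at *
  generalize ∑ i, A i i = τ at *
  -- `d = s t` with `t` the trace of the compression of `A` divided by `n - 1`, and `c = q / s + t`.
  have h := hexp (q / s + (s * τ - q) / (s * (n - 1))) ((s * τ - q) / (n - 1))
  have hid : s ^ 2 * F - (2 * s * V + (s * τ - q) ^ 2 / ((n : ℝ) - 1) - q ^ 2)
      = s ^ 2 * F - 2 * s * V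
      + (q / s + (s * τ - q) / (s * (n - 1))) ^ 2 * s ^ 2 + ((s * τ - q) / (n - 1)) ^ 2 * n
      - 2 * s * (q / s + (s * τ - q) / (s * (n - 1))) * q
      - 2 * s * ((s * τ - q) / (n - 1)) * τ + 2 * q ^ 2 + 4 * ((s * τ - q) / (n - 1)) * q
      - 2 * (q / s + (s * τ - q) / (s * (n - 1))) * ((s * τ - q) / (n - 1)) * s := by
    have h1 := hspos.ne'
    have h2 := hn'.ne'
    field_simp
    ring
  linarith
end

section
/- Let n ≥ 2, let Ω ⊆ ℝⁿ be open, and let v : ℝⁿ → ℝ be twice continuously differentiable on Ω. Then at every point of Ω one has | |D²v Dv|² − Δv·Δ_∞v − (1/2)(|D²v|² − (Δv)²)·|Dv|² | ≤ ((n−2)/2)·(|D²v|²·|Dv|² − |D²v Dv|²). -/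
/-!
In an orthonormal eigenbasis of the symmetric matrix `A = D²v(x)`, with eigenvalues `l i` and with
`c` the coordinates of `Dv(x)`, the right-hand side and the expression inside the absolute value
are linear in the nonnegative weights `c i ^ 2`. By the triangle inequality it therefore suffices
to compare the coefficients of each `c i ^ 2` (`eigenvalue_bound`). If `t` and `s` are the sum and the sum
of squares of the eigenvalues other than `l i`, this comparison
reads `|t² - s| / 2 ≤ (n - 2) / 2 * s`. The upper bound `t² ≤ (n - 1) s` is the Cauchy–Schwarz
inequality; the lower bound `(n - 3) s + t² ≥ 0` is trivial for `n ≥ 3`, and for `n = 2` it is the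
equality `t² = s`.
-/

/-- The gradient of `u : ℝⁿ → ℝ` at `x`, given by the partial derivatives. -/
noncomputable def grad {n : ℕ} (u : (Fin n → ℝ) → ℝ) (x : Fin n → ℝ) : Fin n → ℝ :=
  fun i => fderiv ℝ u x (Pi.single i 1)

/-- The Hessian matrix of `u : ℝⁿ → ℝ` at `x`, given by the second partial derivatives. -/
noncomputable def hess {n : ℕ} (u : (Fin n → ℝ) → ℝ) (x : Fin n → ℝ) :
    Matrix (Fin n) (Fin n) ℝ :=
  Matrix.of fun i j => fderiv ℝ (fun y => fderiv ℝ u y (Pi.single j 1)) x (Pi.single i 1)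

/-- The comparison of coefficients: the inequality for the diagonal matrix with entries `l` and
the `i`-th basis vector. -/
lemma eigenvalue_bound (n : ℕ) (hn : 2 ≤ n) (l : Fin n → ℝ) (i : Fin n) :
    |l i ^ 2 - (∑ j, l j) * l i - (1 / 2) * ((∑ j, l j ^ 2) - (∑ j, l j) ^ 2)|
      ≤ (((n : ℝ) - 2) / 2) * ((∑ j, l j ^ 2) - l i ^ 2) := by
  have hT := Finset.add_sum_erase Finset.univ l (Finset.mem_univ i)
  have hS := Finset.add_sum_erase Finset.univ (fun j => l j ^ 2) (Finset.mem_univ i)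
  have hcard : (Finset.univ.erase i).card = n - 1 := by simp
  have hCS := sq_sum_le_card_mul_sum_sq (s := Finset.univ.erase i) (f := l)
  have hs : 0 ≤ ∑ j ∈ Finset.univ.erase i, l j ^ 2 := Finset.sum_nonneg fun j _ => sq_nonneg _
  have htwo : n = 2 →
      (∑ j ∈ Finset.univ.erase i, l j) ^ 2 = ∑ j ∈ Finset.univ.erase i, l j ^ 2 := by
    intro h
    obtain ⟨k, hk⟩ := Finset.card_eq_one.1 (show (Finset.univ.erase i).card = 1 by omega)
    simp [hk]
  rw [hcard, Nat.cast_sub (by omega), Nat.cast_one] at hCS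
  rw [← hT, ← hS]
  generalize (∑ j ∈ Finset.univ.erase i, l j) = t at *
  generalize (∑ j ∈ Finset.univ.erase i, l j ^ 2) = s at *
  rw [abs_le]
  constructor
  · rcases Nat.lt_or_ge 2 n with h | h
    · have h3 : (3 : ℝ) ≤ n := by exact_mod_cast h
      nlinarith [mul_nonneg (sub_nonneg.2 h3) hs, sq_nonneg t]
    · have h2 : n = 2 := by omega
      have := htwo h2
      subst h2
      push_cast
      nlinarith
  · nlinarith

open Matrix in
/-- The algebraic form of the inequality, for a symmetric matrix and an arbitrary vector. -/
lemma symm_matrix_bound (n : ℕ) (hn : 2 ≤ n) (A : Matrix (Fin n) (Fin n) ℝ) (hA : A.IsHermitian)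
    (g : Fin n → ℝ) :
    |(∑ i, (A.mulVec g i) ^ 2)
        - A.trace * (∑ i, g i * A.mulVec g i)
        - (1 / 2) * ((∑ i, ∑ j, A i j ^ 2) - A.trace ^ 2) * (∑ i, g i ^ 2)|
      ≤ (((n : ℝ) - 2) / 2) *
          ((∑ i, ∑ j, A i j ^ 2) * (∑ i, g i ^ 2) - ∑ i, (A.mulVec g i) ^ 2) := by
  obtain ⟨U, l, hU, hU', hAU⟩ : ∃ (U : Matrix (Fin n) (Fin n) ℝ) (l : Fin n → ℝ),
      Uᵀ * U = 1 ∧ U * Uᵀ = 1 ∧ A = U * diagonal l * Uᵀ := by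
    refine ⟨hA.eigenvectorUnitary, hA.eigenvalues, ?_, ?_, ?_⟩
    · simpa [star_eq_conjTranspose] using Unitary.coe_star_mul_self hA.eigenvectorUnitary
    · simpa [star_eq_conjTranspose] using Unitary.coe_mul_star_self hA.eigenvectorUnitary
    · simpa [star_eq_conjTranspose, Unitary.conjStarAlgAut_apply, Function.comp_def]
        using hA.spectral_theorem
  have hdot (x y : Fin n → ℝ) : (U *ᵥ x) ⬝ᵥ (U *ᵥ y) = x ⬝ᵥ y := by
    rw [dotProduct_mulVec, vecMul_mulVec, ← mulVec_transpose, transpose_mul, transpose_transpose,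
      hU, one_mulVec]
  obtain ⟨c, rfl⟩ : ∃ c, g = U *ᵥ c := ⟨Uᵀ *ᵥ g, by simp [hU']⟩
  have hAg : A *ᵥ (U *ᵥ c) = U *ᵥ (fun i => l i * c i) := by
    rw [hAU, mulVec_mulVec, mul_assoc, hU, mul_one, ← mulVec_mulVec]
    congr 1
    ext i
    simp [mulVec_diagonal]
  have hsq (x : Fin n → ℝ) : ∑ i, x i ^ 2 = x ⬝ᵥ x := by simp [dotProduct, sq]
  have h1 : ∑ i, ((A *ᵥ (U *ᵥ c)) i) ^ 2 = ∑ i, l i ^ 2 * c i ^ 2 := by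
    rw [hsq, hAg, hdot]
    exact Finset.sum_congr rfl fun i _ => by ring
  have h2 : ∑ i, (U *ᵥ c) i * (A *ᵥ (U *ᵥ c)) i = ∑ i, l i * c i ^ 2 := by
    change (U *ᵥ c) ⬝ᵥ (A *ᵥ (U *ᵥ c)) = _
    rw [hAg, hdot]
    exact Finset.sum_congr rfl fun i _ => by ring
  have h3 : ∑ i, ((U *ᵥ c) i) ^ 2 = ∑ i, c i ^ 2 := by
    rw [hsq, hdot, hsq]
  have htr : A.trace = ∑ i, l i := by
    rw [hAU, trace_mul_comm, ← mul_assoc, hU, one_mul, trace_diagonal]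
  have hfr : ∑ i, ∑ j, A i j ^ 2 = ∑ i, l i ^ 2 := by
    have e1 : ∑ i, ∑ j, A i j ^ 2 = (A * Aᵀ).trace := by
      simp [trace, mul_apply, sq]
    have e2 : A * Aᵀ = U * (diagonal l * diagonal l * Uᵀ) := by
      rw [hAU]
      simp only [transpose_mul, transpose_transpose, diagonal_transpose, mul_assoc]
      rw [← mul_assoc Uᵀ U, hU, one_mul]
    rw [e1, e2, trace_mul_comm, mul_assoc, hU, mul_one, diagonal_mul_diagonal, trace_diagonal]
    simp [sq]
  rw [h1, h2, h3, htr, hfr]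
  set T := ∑ i, l i
  set S := ∑ i, l i ^ 2
  calc _ = |∑ i, (l i ^ 2 - T * l i - (1 / 2) * (S - T ^ 2)) * c i ^ 2| := by
        simp only [sub_mul, Finset.sum_sub_distrib, Finset.mul_sum, mul_assoc]
    _ ≤ ∑ i, |(l i ^ 2 - T * l i - (1 / 2) * (S - T ^ 2)) * c i ^ 2| :=
        Finset.abs_sum_le_sum_abs _ _
    _ ≤ ∑ i, ((n : ℝ) - 2) / 2 * (S - l i ^ 2) * c i ^ 2 := by
        refine Finset.sum_le_sum fun i _ => ?_
        rw [abs_mul, abs_of_nonneg (sq_nonneg (c i))]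
        exact mul_le_mul_of_nonneg_right (eigenvalue_bound n hn l i) (sq_nonneg _)
    _ = _ := by
        simp only [mul_sub, sub_mul, Finset.sum_sub_distrib, Finset.mul_sum, mul_assoc]

lemma hess_isHermitian {n : ℕ} {v : (Fin n → ℝ) → ℝ} {x : Fin n → ℝ} (h : ContDiffAt ℝ 2 v x) :
    (hess v x).IsHermitian := by
  have hd : DifferentiableAt ℝ (fderiv ℝ v) x :=
    (h.fderiv_right (m := 1) (by norm_num)).differentiableAt (by norm_num)
  have hs : IsSymmSndFDerivAt ℝ v x := h.isSymmSndFDerivAt (by simp)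
  have key (i j : Fin n) :
      hess v x i j = fderiv ℝ (fderiv ℝ v) x (Pi.single i 1) (Pi.single j 1) := by
    simp [hess, fderiv_clm_apply hd (differentiableAt_const _)]
  ext i j
  simp only [Matrix.conjTranspose_apply, star_trivial, key]
  exact hs.eq _ _

/-- For `n ≥ 2`, `Ω ⊆ ℝⁿ` open and `v` twice continuously differentiable on `Ω`,
at every point of `Ω` one has
`| |D²v Dv|² − Δv Δ_∞ v − ½(|D²v|² − (Δv)²)|Dv|² | ≤ ((n−2)/2)(|D²v|² |Dv|² − |D²v Dv|²)`. -/
theorem inequality_of_Dong_et_al (n : ℕ) (hn : 2 ≤ n) (Ω : Set (Fin n → ℝ)) (hΩ : IsOpen Ω)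
    (v : (Fin n → ℝ) → ℝ) (hv : ContDiffOn ℝ 2 v Ω) (x : Fin n → ℝ) (hx : x ∈ Ω) :
    |(∑ i, ((hess v x).mulVec (grad v x) i) ^ 2)
        - (hess v x).trace * (∑ i, grad v x i * (hess v x).mulVec (grad v x) i)
        - (1 / 2) * ((∑ i, ∑ j, hess v x i j ^ 2) - (hess v x).trace ^ 2)
            * (∑ i, grad v x i ^ 2)|
      ≤ (((n : ℝ) - 2) / 2) *
          ((∑ i, ∑ j, hess v x i j ^ 2) * (∑ i, grad v x i ^ 2)
            - ∑ i, ((hess v x).mulVec (grad v x) i) ^ 2) := by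
  exact symm_matrix_bound n hn _ (hess_isHermitian (hv.contDiffAt (hΩ.mem_nhds hx))) _
end

section
/- Let n ≥ 2, let A be a symmetric n×n real matrix and let e ∈ ℝⁿ with |e| = 1. Then | |Ae|² − tr(A)·⟨e, Ae⟩ − (1/2)(|A|² − tr(A)²) | ≤ ((n−2)/2)·(|A|² − |Ae|²), where |A| denotes the Hilbert–Schmidt (Frobenius) norm of A. -/
/-!
Put `w = Ae`, `a = ⟨e, Ae⟩`, and let `P = 1 - e eᵀ` be the orthogonal projection onto `e^⊥`. The
compression `B = PAP` has trace `t = tr A - a` and `|B|² = |A|² - 2|w|² + a²`, so the quantity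
inside the absolute value is `½(t² - |B|²)`, while `|A|² - |w|² = |B|² + (|w|² - a²)` with
`a² ≤ |w|²` by Cauchy–Schwarz. It remains to compare `|t² - |B|²|` with `(n - 2)|B|²`.

* Upper bound: `t = ⟨B, P⟩` and `|P|² = n - 1`, so `t² ≤ (n - 1)|B|²` by Cauchy–Schwarz
  (`sq_trace_compression_le`).
* Lower bound: for `n ≥ 3`, `|B|² - t² ≤ |B|² ≤ (n - 2)|B|²`. For `n = 2` the compression has rank
  at most one, so `|B|² = t²`; in coordinates the quantity equals `det A * (1 - |e|²)`.
-/

/-- The entries of the compression `PAP` of `A` to `e^⊥`, `P = 1 - e eᵀ`, written in terms of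
`w = Ae` and `a = ⟨e, Ae⟩` (for symmetric `A` and unit `e`). -/
def compression {n : ℕ} (A : Matrix (Fin n) (Fin n) ℝ) (e : Fin n → ℝ) (i j : Fin n) : ℝ :=
  A i j - e i * A.mulVec e j - A.mulVec e i * e j
    + (∑ k, e k * A.mulVec e k) * (e i * e j)

lemma sum_sq_compression {n : ℕ} (A : Matrix (Fin n) (Fin n) ℝ) (hA : A.IsSymm) (e : Fin n → ℝ)
    (he : ∑ i, e i ^ 2 = 1) :
    ∑ i, ∑ j, compression A e i j ^ 2 =
      (∑ i, ∑ j, A i j ^ 2) - 2 * (∑ i, A.mulVec e i ^ 2) + (∑ i, e i * A.mulVec e i) ^ 2 := by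
  have hw : ∀ i, ∑ j, A i j * e j = A.mulVec e i := fun i => rfl
  unfold compression
  set w := A.mulVec e with hwdef
  set a := ∑ k, e k * w k with ha
  set W := ∑ k, w k ^ 2 with hW
  -- `⟨e, Aw⟩ = ⟨Ae, w⟩` by symmetry.
  have hu : ∑ i, e i * ∑ j, A i j * w j = W := by
    simp only [Finset.mul_sum]
    rw [Finset.sum_comm]
    refine Finset.sum_congr rfl fun j _ => ?_
    rw [sq, ← hw j, Finset.sum_mul]
    simp only [hw]
    refine Finset.sum_congr rfl fun i _ => ?_
    rw [← hA.apply i j]; ring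
  have inner : ∀ i, ∑ j, (A i j - e i * w j - w i * e j + a * (e i * e j)) ^ 2 =
      (∑ j, A i j ^ 2) - 2 * (e i * ∑ j, A i j * w j) + W * e i ^ 2 - w i ^ 2
        + 2 * a * (e i * w i) - a ^ 2 * e i ^ 2 := by
    intro i
    have : ∀ j, (A i j - e i * w j - w i * e j + a * (e i * e j)) ^ 2 =
        A i j ^ 2 + (-2 * e i) * (A i j * w j) + (-2 * w i + 2 * a * e i) * (A i j * e j)
        + e i ^ 2 * w j ^ 2 + (w i - a * e i) ^ 2 * e j ^ 2
        + (2 * e i * (w i - a * e i)) * (e j * w j) := fun j => by ring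
    simp only [this, Finset.sum_add_distrib, ← Finset.mul_sum]
    rw [hw, he, ← ha, ← hW]
    ring
  simp only [inner, Finset.sum_add_distrib, Finset.sum_sub_distrib, ← Finset.mul_sum]
  rw [hu, he, ← ha, ← hW]
  ring

lemma sq_trace_compression_le {n : ℕ} (A : Matrix (Fin n) (Fin n) ℝ) (e : Fin n → ℝ)
    (he : ∑ i, e i ^ 2 = 1) :
    (A.trace - ∑ i, e i * A.mulVec e i) ^ 2 ≤
      ((n : ℝ) - 1) * ∑ i, ∑ j, compression A e i j ^ 2 := by
  have hw : ∀ i, ∑ j, A i j * e j = A.mulVec e i := fun i => rfl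
  -- `P` below is the matrix of the projection onto `e^⊥`.
  set P : Fin n → Fin n → ℝ := fun i j => (if i = j then 1 else 0) - e i * e j with hP
  have hPP : ∑ i, ∑ j, P i j ^ 2 = (n : ℝ) - 1 := by
    have : ∀ i j, P i j ^ 2 =
        (if i = j then 1 - 2 * (e i * e j) else 0) + e i ^ 2 * e j ^ 2 := by
      intro i j
      simp only [hP]
      split_ifs <;> ring
    simp only [this, Finset.sum_add_distrib, ← Finset.mul_sum, he, Finset.sum_ite_eq,
      Finset.mem_univ, if_true, Finset.sum_sub_distrib, ← sq]
    simp [he]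
    ring
  have hBe : ∀ i, ∑ j, compression A e i j * e j = 0 := by
    intro i
    have : ∀ j, compression A e i j * e j = A i j * e j - e i * (e j * A.mulVec e j)
        - A.mulVec e i * e j ^ 2 + (∑ k, e k * A.mulVec e k) * e i * e j ^ 2 := by
      intro j; unfold compression; ring
    simp only [this, Finset.sum_add_distrib, Finset.sum_sub_distrib, ← Finset.mul_sum, he, hw]
    ring
  have hBP : ∑ i, ∑ j, P i j * compression A e i j = A.trace - ∑ i, e i * A.mulVec e i := by
    have : ∀ i j, P i j * compression A e i j =
        (if i = j then compression A e i j else 0) - e i * (compression A e i j * e j) := by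
      intro i j
      simp only [hP]
      split_ifs <;> ring
    simp only [this, Finset.sum_sub_distrib, ← Finset.mul_sum, hBe, Finset.sum_ite_eq,
      Finset.mem_univ, if_true, mul_zero, sub_zero]
    have : ∀ i, compression A e i i = A i i - 2 * (e i * A.mulVec e i)
        + (∑ k, e k * A.mulVec e k) * e i ^ 2 := by
      intro i; unfold compression; ring
    simp only [this, Finset.sum_add_distrib, Finset.sum_sub_distrib, ← Finset.mul_sum, he,
      Matrix.trace, Matrix.diag_apply]
    ring
  have cs := Finset.sum_mul_sq_le_sq_mul_sq (Finset.univ : Finset (Fin n × Fin n))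
    (fun p => P p.1 p.2) (fun p => compression A e p.1 p.2)
  simp only [Fintype.sum_prod_type] at cs
  rwa [hBP, hPP] at cs

/-- For `n ≥ 2`, a symmetric `n × n` real matrix `A` and a unit vector `e`,
`| |Ae|² − tr(A) ⟨e, Ae⟩ − ½(|A|² − tr(A)²) | ≤ ((n−2)/2) (|A|² − |Ae|²)`,
where `|A|` is the Frobenius (Hilbert–Schmidt) norm. -/
theorem matrix_inequality_unit_vector (n : ℕ) (hn : 2 ≤ n)
    (A : Matrix (Fin n) (Fin n) ℝ) (hA : A.IsSymm) (e : Fin n → ℝ)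
    (he : ∑ i, e i ^ 2 = 1) :
    |(∑ i, (A.mulVec e i) ^ 2) - A.trace * (∑ i, e i * A.mulVec e i)
        - (1 / 2) * ((∑ i, ∑ j, A i j ^ 2) - A.trace ^ 2)|
      ≤ (((n : ℝ) - 2) / 2) * ((∑ i, ∑ j, A i j ^ 2) - ∑ i, (A.mulVec e i) ^ 2) := by
  rcases hn.eq_or_lt with rfl | h3
  · have hs : A 1 0 = A 0 1 := hA.apply 0 1
    simp only [Fin.sum_univ_two] at he
    simp only [Fin.sum_univ_two, Matrix.mulVec, dotProduct, Matrix.trace, Matrix.diag_apply, hs]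
    -- The right side is `0`, and the quantity inside the absolute value is `det A * (1 - |e|²)`.
    rw [abs_le]
    constructor <;> apply le_of_eq <;> push_cast
    · linear_combination (A 0 0 * A 1 1 - A 0 1 ^ 2) * he
    · linear_combination -(A 0 0 * A 1 1 - A 0 1 ^ 2) * he
  · have hB := sum_sq_compression A hA e he
    have ht := sq_trace_compression_le A e he
    have hv := Finset.sum_mul_sq_le_sq_mul_sq Finset.univ e (A.mulVec e)
    have hB0 : 0 ≤ ∑ i, ∑ j, compression A e i j ^ 2 := by positivity
    have hn3 : (3 : ℝ) ≤ n := by exact_mod_cast h3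
    rw [he, one_mul] at hv
    generalize ∑ i, ∑ j, compression A e i j ^ 2 = b at *
    generalize ∑ i, ∑ j, A i j ^ 2 = F at *
    generalize ∑ i, e i * A.mulVec e i = a at *
    generalize ∑ i, A.mulVec e i ^ 2 = W at *
    have h1 := mul_nonneg (by linarith : (0 : ℝ) ≤ n - 2) (sub_nonneg.2 hv)
    have h2 := mul_nonneg (by linarith : (0 : ℝ) ≤ n - 3) hB0
    have hF : F = b + 2 * W - a ^ 2 := by linarith
    subst hF
    rw [abs_le]
    constructor
    · nlinarith [sq_nonneg (A.trace - a)]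
    · nlinarith
end

section
/- Let n ≥ 2, let A be a symmetric n×n real matrix and let e ∈ ℝⁿ. Then |e|⁴·|A|² ≥ (n/(n−1))·|e|²·|Ae|² + (1/(n−1))·|e|⁴·tr(A)² − (2/(n−1))·|e|²·tr(A)·⟨e, Ae⟩, where |A| denotes the Hilbert–Schmidt (Frobenius) norm of A. -/
/-!
Write `s = |e|²`, `v = A e`, `a = ⟨e, v⟩` and `T = tr A`. For `e ≠ 0`, let `P = s I - e eᵀ`, which is
`s` times the orthogonal projection onto `e^⊥`. Up to the factor `s²`, the block of `A` on `e^⊥`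
is `P A P = s² A - s (e vᵀ + v eᵀ) + a e eᵀ`, and subtracting its trace part `c P` with
`c = (s T - a) / (n - 1)` leaves a trace-free matrix. Nonnegativity of the squared Frobenius
norm of that matrix, computed by `sum_sq_expand`, is
`s² |A|² ≥ 2 s |v|² - a² + (s T - a)² / (n - 1)`.
This exceeds the claimed lower bound by `(n - 2) / (n - 1) * (s |v|² - a²)`, which is nonnegative
by the Cauchy–Schwarz inequality and `n ≥ 2`.
-/

/-- The squared Frobenius norm of `α A + β (e vᵀ + v eᵀ) + γ e eᵀ + δ I`, where `v = A e`. -/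
theorem sum_sq_expand {n : ℕ} (A : Matrix (Fin n) (Fin n) ℝ) (hA : A.IsSymm)
    (e v : Fin n → ℝ) (hv : A.mulVec e = v) (α β γ δ : ℝ) :
    ∑ i, ∑ j, (α * A i j + β * (e i * v j + v i * e j) + γ * (e i * e j)
        + δ * (if i = j then 1 else 0)) ^ 2 =
      α ^ 2 * (∑ i, ∑ j, A i j ^ 2)
        + 2 * β ^ 2 * ((∑ i, e i ^ 2) * (∑ i, v i ^ 2) + (∑ i, e i * v i) ^ 2)
        + γ ^ 2 * (∑ i, e i ^ 2) ^ 2 + n * δ ^ 2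
        + 4 * α * β * (∑ i, v i ^ 2) + 2 * α * γ * (∑ i, e i * v i) + 2 * α * δ * A.trace
        + 4 * β * γ * (∑ i, e i * v i) * (∑ i, e i ^ 2)
        + 4 * β * δ * (∑ i, e i * v i) + 2 * γ * δ * (∑ i, e i ^ 2) := by
  have hvi : ∀ i, ∑ j, A i j * e j = v i := fun i => by
    rw [← hv]; rfl
  have hw : ∑ i, e i * ∑ j, A i j * v j = ∑ i, v i ^ 2 := by
    simp_rw [Finset.mul_sum]
    rw [Finset.sum_comm]
    refine Finset.sum_congr rfl fun j _ => ?_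
    have h : v j ^ 2 = (∑ i, A j i * e i) * v j := by rw [hvi, sq]
    rw [h, Finset.sum_mul]
    refine Finset.sum_congr rfl fun i _ => ?_
    rw [← hA.apply i j]; ring
  have hrow : ∀ i, ∑ j, (α * A i j + β * (e i * v j + v i * e j) + γ * (e i * e j)
        + δ * (if i = j then 1 else 0)) ^ 2 =
      α ^ 2 * (∑ j, A i j ^ 2)
        + β ^ 2 * (∑ j, v j ^ 2) * e i ^ 2 + β ^ 2 * (∑ j, e j ^ 2) * v i ^ 2
        + 2 * β ^ 2 * (∑ j, e j * v j) * (e i * v i)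
        + γ ^ 2 * (∑ j, e j ^ 2) * e i ^ 2 + δ ^ 2
        + 2 * α * β * (e i * ∑ j, A i j * v j) + 2 * α * β * v i ^ 2
        + 2 * α * γ * (e i * v i) + 2 * α * δ * A i i
        + 2 * β * γ * (∑ j, e j * v j) * e i ^ 2 + 2 * β * γ * (∑ j, e j ^ 2) * (e i * v i)
        + 4 * β * δ * (e i * v i) + 2 * γ * δ * e i ^ 2 := fun i => by
    have hj : ∀ j, (α * A i j + β * (e i * v j + v i * e j) + γ * (e i * e j)
        + δ * (if i = j then 1 else 0)) ^ 2 =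
        α ^ 2 * A i j ^ 2 + (β ^ 2 * e i ^ 2) * v j ^ 2
          + (β ^ 2 * v i ^ 2 + γ ^ 2 * e i ^ 2 + 2 * β * γ * (e i * v i)) * e j ^ 2
          + (2 * β ^ 2 * (e i * v i) + 2 * β * γ * e i ^ 2) * (e j * v j)
          + (2 * α * β * e i) * (A i j * v j)
          + (2 * α * β * v i + 2 * α * γ * e i) * (A i j * e j)
          + (if i = j then δ ^ 2 + 2 * α * δ * A i i + 4 * β * δ * (e i * v i)
              + 2 * γ * δ * e i ^ 2 else 0) := fun j => by
      split_ifs with h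
      · subst h; ring
      · ring
    simp_rw [hj, Finset.sum_add_distrib, ← Finset.mul_sum, hvi]
    simp only [Finset.sum_ite_eq, Finset.mem_univ, if_true]
    ring
  simp_rw [hrow, Finset.sum_add_distrib, ← Finset.mul_sum, hw]
  simp only [Finset.sum_const, Finset.card_univ, Fintype.card_fin, nsmul_eq_mul, Matrix.trace,
    Matrix.diag_apply]
  ring

/-- For `n ≥ 2`, a symmetric `n × n` real matrix `A` and `e ∈ ℝⁿ`,
`|e|⁴ |A|² ≥ (n/(n−1)) |e|² |Ae|² + (1/(n−1)) |e|⁴ tr(A)² − (2/(n−1)) |e|² tr(A) ⟨e, Ae⟩`,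
where `|A|` is the Frobenius (Hilbert–Schmidt) norm. -/
theorem matrix_inequality_weaker (n : ℕ) (hn : 2 ≤ n)
    (A : Matrix (Fin n) (Fin n) ℝ) (hA : A.IsSymm) (e : Fin n → ℝ) :
    (∑ i, e i ^ 2) ^ 2 * (∑ i, ∑ j, A i j ^ 2) ≥
      ((n : ℝ) / ((n : ℝ) - 1)) * (∑ i, e i ^ 2) * (∑ i, (A.mulVec e i) ^ 2)
        + (1 / ((n : ℝ) - 1)) * (∑ i, e i ^ 2) ^ 2 * A.trace ^ 2
        - (2 / ((n : ℝ) - 1)) * (∑ i, e i ^ 2) * A.trace * (∑ i, e i * A.mulVec e i) := by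
  have hm : (0 : ℝ) < (n : ℝ) - 1 := by
    have : (2 : ℝ) ≤ n := by exact_mod_cast hn
    linarith
  have hm2 : (0 : ℝ) ≤ (n : ℝ) - 2 := by
    have : (2 : ℝ) ≤ n := by exact_mod_cast hn
    linarith
  have key := sum_sq_expand A hA e (A.mulVec e) rfl
  have cs := Finset.sum_mul_sq_le_sq_mul_sq Finset.univ e (A.mulVec e)
  have hs : 0 ≤ ∑ i, e i ^ 2 := Finset.sum_nonneg fun i _ => sq_nonneg _
  generalize A.mulVec e = v at *
  generalize (∑ i, ∑ j, A i j ^ 2) = F at *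
  generalize (∑ i, e i * v i) = a at *
  generalize (∑ i, v i ^ 2) = V at *
  generalize A.trace = T at *
  generalize (∑ i, e i ^ 2) = s at *
  rcases hs.eq_or_lt with rfl | hs
  · simp
  obtain ⟨c, hc⟩ : ∃ c, c = (s * T - a) / ((n : ℝ) - 1) := ⟨_, rfl⟩
  have hca : c * ((n : ℝ) - 1) = s * T - a := by rw [hc]; field_simp
  -- The coefficients of `P A P - c P`.
  have h0 := key (s ^ 2) (-s) (a + c) (-(c * s))
  have h1 : 0 ≤ s ^ 2 * (s ^ 2 * F - 2 * s * V + a ^ 2 - c * (s * T - a)) := by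
    refine (Finset.sum_nonneg fun i _ => Finset.sum_nonneg fun j _ => sq_nonneg _).trans_eq
      (h0.trans ?_)
    linear_combination s ^ 2 * c * hca
  have h2 := nonneg_of_mul_nonneg_right h1 (by positivity)
  have h3 : 0 ≤ ((n : ℝ) - 2) / ((n : ℝ) - 1) * (s * V - a ^ 2) :=
    mul_nonneg (div_nonneg hm2 hm.le) (by linarith)
  rw [hc] at h2
  have h4 : s ^ 2 * F - ((n : ℝ) / ((n : ℝ) - 1) * s * V + 1 / ((n : ℝ) - 1) * s ^ 2 * T ^ 2
        - 2 / ((n : ℝ) - 1) * s * T * a) =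
      (s ^ 2 * F - 2 * s * V + a ^ 2 - (s * T - a) / ((n : ℝ) - 1) * (s * T - a))
        + ((n : ℝ) - 2) / ((n : ℝ) - 1) * (s * V - a ^ 2) := by
    field_simp
    ring
  linarith
end

section
/- Let n ≥ 2, 1 < p < ∞, ε > 0, let U ⊆ ℝⁿ be open, and let u be a smooth function on U satisfying the regularized p-Laplace equation div((|Du|² + ε)^{(p−2)/2} Du) = 0 pointwise in U. Set μ := (|Du|² + ε)^{1/2}. Then there exists a constant C = C(p) > 0 such that for every smooth compactly supported function φ with support contained in U and every z ∈ ℝⁿ, ∫_U μ^{p−2} |D²u|² φ² dx ≤ C ∫_U μ^{p−2} |Du − z|² |Dφ|² dx. -/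
/-- `μ := (|Du|² + ε)^{1/2}`. -/
noncomputable def mu {n : ℕ} (ε : ℝ) (u : (Fin n → ℝ) → ℝ) (x : Fin n → ℝ) : ℝ :=
  Real.sqrt ((∑ i, grad u x i ^ 2) + ε)

/-- The regularized `p`-Laplace equation `div((|Du|² + ε)^{(p−2)/2} Du) = 0` holds pointwise
in `U`:  the divergence of the vector field `x ↦ (|Du(x)|² + ε)^{(p−2)/2} Du(x)` vanishes at
every point of `U`. -/
def RegularizedPLaplace {n : ℕ} (p ε : ℝ) (u : (Fin n → ℝ) → ℝ) (U : Set (Fin n → ℝ)) : Prop :=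
  ∀ x ∈ U, ∑ i, fderiv ℝ
      (fun y => ((∑ j, grad u y j ^ 2) + ε) ^ ((p - 2) / 2) * grad u y i) x (Pi.single i 1) = 0

open scoped ContDiff
open MeasureTheory

/-! ### Second derivatives of smooth functions -/

theorem contDiffAt_fderiv_apply {E : Type*} [NormedAddCommGroup E] [NormedSpace ℝ E]
    {f : E → ℝ} {x : E} (hf : ContDiffAt ℝ ∞ f x) (v : E) :
    ContDiffAt ℝ ∞ (fun y => fderiv ℝ f y v) x :=
  (hf.fderiv_right (m := ∞) (by simp)).clm_apply contDiffAt_const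

theorem fderiv_fderiv_comm {E : Type*} [NormedAddCommGroup E] [NormedSpace ℝ E]
    {f : E → ℝ} {x : E} (hf : ContDiffAt ℝ ∞ f x) (a b : E) :
    fderiv ℝ (fun y => fderiv ℝ f y a) x b = fderiv ℝ (fun y => fderiv ℝ f y b) x a := by
  have hd : DifferentiableAt ℝ (fderiv ℝ f) x :=
    (hf.fderiv_right (m := ∞) (by simp)).differentiableAt (by simp)
  have hs : IsSymmSndFDerivAt ℝ f x := hf.isSymmSndFDerivAt (by
    simpa using (show ((2 : ℕ∞) : WithTop ℕ∞) ≤ ∞ from WithTop.coe_le_coe.2 le_top))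
  have key : ∀ v w : E, fderiv ℝ (fun y => fderiv ℝ f y v) x w = fderiv ℝ (fderiv ℝ f) x w v := by
    intro v w
    rw [fderiv_clm_apply hd (by fun_prop)]
    simp
  rw [key, key, hs.eq]

/-! ### The quadratic form `B` -/

/-- The coercivity bound `λ |a|² ≤ B(a, a)` with `λ = min(1, p-1)`, where
`B(a, a) = |a|² + (p-2) (g·a)² / S`. -/
theorem quad_lower {n : ℕ} {p S : ℝ} (g a : Fin n → ℝ) (hS : 0 < S)
    (hg : ∑ i, g i ^ 2 ≤ S) :
    min 1 (p - 1) * ∑ i, a i ^ 2 ≤ ∑ i, a i ^ 2 + (p - 2) / S * (∑ i, g i * a i) ^ 2 := by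
  have ha : 0 ≤ ∑ i, a i ^ 2 := Finset.sum_nonneg fun i _ => sq_nonneg _
  have hcs := Finset.sum_mul_sq_le_sq_mul_sq Finset.univ g a
  have ht : (∑ i, g i * a i) ^ 2 / S ≤ ∑ i, a i ^ 2 := by
    rw [div_le_iff₀ hS]; nlinarith
  have ht0 : 0 ≤ (∑ i, g i * a i) ^ 2 / S := by positivity
  have : (p - 2) / S * (∑ i, g i * a i) ^ 2 = (p - 2) * ((∑ i, g i * a i) ^ 2 / S) := by ring
  rw [this]
  rcases le_total 2 p with h | h
  · rw [min_eq_left (by linarith)]; nlinarith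
  · rw [min_eq_right (by linarith)]; nlinarith

theorem quad_upper {n : ℕ} {p S : ℝ} (hp : 1 < p) (g a : Fin n → ℝ) (hS : 0 < S)
    (hg : ∑ i, g i ^ 2 ≤ S) :
    ∑ i, a i ^ 2 + (p - 2) / S * (∑ i, g i * a i) ^ 2 ≤ p * ∑ i, a i ^ 2 := by
  have ha : 0 ≤ ∑ i, a i ^ 2 := Finset.sum_nonneg fun i _ => sq_nonneg _
  have hcs := Finset.sum_mul_sq_le_sq_mul_sq Finset.univ g a
  have ht : (∑ i, g i * a i) ^ 2 / S ≤ ∑ i, a i ^ 2 := by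
    rw [div_le_iff₀ hS]; nlinarith
  have ht0 : 0 ≤ (∑ i, g i * a i) ^ 2 / S := by positivity
  have : (p - 2) / S * (∑ i, g i * a i) ^ 2 = (p - 2) * ((∑ i, g i * a i) ^ 2 / S) := by ring
  rw [this]
  rcases le_total 2 p with h | h <;> nlinarith

/-- The estimate for one row `h` of the Hessian:
`½ λ φ² |h|² - 2p w² |d|² ≤ φ² B(h, h) + 2 φ w B(h, d)`. -/
theorem row_estimate {n : ℕ} {p S : ℝ} (hp : 1 < p) (g h d : Fin n → ℝ) (φ w : ℝ) (hS : 0 < S)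
    (hg : ∑ i, g i ^ 2 ≤ S) :
    min 1 (p - 1) / 2 * (∑ i, h i ^ 2) * φ ^ 2 - 2 * p * w ^ 2 * ∑ i, d i ^ 2 ≤
      ∑ i, (h i + (p - 2) / S * (∑ j, g j * h j) * g i) * (φ ^ 2 * h i + 2 * φ * d i * w) := by
  have h1 := quad_lower (p := p) g h hS hg
  have h2 := quad_upper hp g d hS hg
  have h3 := quad_lower (p := p) g (fun i => φ * h i + 2 * w * d i) hS hg
  have h4 : 0 ≤ min 1 (p - 1) * ∑ i, (φ * h i + 2 * w * d i) ^ 2 :=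
    mul_nonneg (le_min (by norm_num) (by linarith)) (Finset.sum_nonneg fun i _ => sq_nonneg _)
  have e1 : ∑ i, (φ * h i + 2 * w * d i) ^ 2 = φ ^ 2 * ∑ i, h i ^ 2
      + 4 * φ * w * ∑ i, h i * d i + 4 * w ^ 2 * ∑ i, d i ^ 2 := by
    simp only [Finset.mul_sum, ← Finset.sum_add_distrib]
    exact Finset.sum_congr rfl fun i _ => by ring
  have e2 : ∑ i, g i * (φ * h i + 2 * w * d i) = φ * ∑ i, g i * h i
      + 2 * w * ∑ i, g i * d i := by
    simp only [Finset.mul_sum, ← Finset.sum_add_distrib]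
    exact Finset.sum_congr rfl fun i _ => by ring
  have e3 : ∑ i, (h i + (p - 2) / S * (∑ j, g j * h j) * g i)
        * (φ ^ 2 * h i + 2 * φ * d i * w)
      = φ ^ 2 * ∑ i, h i ^ 2 + 2 * φ * w * ∑ i, h i * d i
        + (p - 2) / S * (∑ j, g j * h j) * φ ^ 2 * ∑ i, g i * h i
        + (p - 2) / S * (∑ j, g j * h j) * (2 * φ * w) * ∑ i, g i * d i := by
    generalize (p - 2) / S * (∑ j, g j * h j) = c
    simp only [Finset.mul_sum, ← Finset.sum_add_distrib]
    exact Finset.sum_congr rfl fun i _ => by ring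
  have h5 := h4.trans h3
  rw [e1, e2] at h5
  rw [e3]
  generalize (∑ i, h i ^ 2) = hh at *
  generalize (∑ i, d i ^ 2) = dd at *
  generalize (∑ i, h i * d i) = hd at *
  generalize (∑ i, g i * h i) = gh at *
  generalize (∑ i, g i * d i) = gd at *
  generalize (p - 2) / S = c at *
  have h6 := mul_le_mul_of_nonneg_left h1 (sq_nonneg φ)
  have h7 := mul_le_mul_of_nonneg_left h2 (sq_nonneg w)
  nlinarith

/-! ### The flux `V` and the field `G` -/

/-- The vector field `V = (|Du|² + ε)^{(p-2)/2} Du`, by components. -/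
noncomputable def flux {n : ℕ} (p ε : ℝ) (u : (Fin n → ℝ) → ℝ) (i : Fin n) (y : Fin n → ℝ) : ℝ :=
  ((∑ j, grad u y j ^ 2) + ε) ^ ((p - 2) / 2) * grad u y i

/-- The compactly supported field `G = ∑ₖ φ² (∂ₖu - zₖ) ∂ₖV`, by components. -/
noncomputable def testField {n : ℕ} (p ε : ℝ) (u φ : (Fin n → ℝ) → ℝ) (z : Fin n → ℝ)
    (i : Fin n) (y : Fin n → ℝ) : ℝ :=
  ∑ k, fderiv ℝ (flux p ε u i) y (Pi.single k 1) * (φ y ^ 2 * (grad u y k - z k))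

section Local

variable {n : ℕ} {p ε : ℝ} {u φ : (Fin n → ℝ) → ℝ} {x : Fin n → ℝ}

theorem contDiffAt_grad (hu : ContDiffAt ℝ ∞ u x) (i : Fin n) :
    ContDiffAt ℝ ∞ (fun y => grad u y i) x :=
  contDiffAt_fderiv_apply hu _

theorem weight_pos (hε : 0 < ε) (y : Fin n → ℝ) : 0 < (∑ j, grad u y j ^ 2) + ε :=
  add_pos_of_nonneg_of_pos (Finset.sum_nonneg fun _ _ => sq_nonneg _) hε

theorem contDiffAt_weight (hu : ContDiffAt ℝ ∞ u x) :
    ContDiffAt ℝ ∞ (fun y => (∑ j, grad u y j ^ 2) + ε) x :=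
  (ContDiffAt.sum fun _ _ => (contDiffAt_grad hu _).pow 2).add contDiffAt_const

theorem contDiffAt_flux (hε : 0 < ε) (hu : ContDiffAt ℝ ∞ u x) (i : Fin n) :
    ContDiffAt ℝ ∞ (flux p ε u i) x :=
  ((contDiffAt_weight hu).rpow_const_of_ne (weight_pos hε x).ne').mul (contDiffAt_grad hu i)

theorem contDiffAt_testField (hε : 0 < ε) (hu : ContDiffAt ℝ ∞ u x) (hφ : ContDiffAt ℝ ∞ φ x)
    (z : Fin n → ℝ) (i : Fin n) : ContDiffAt ℝ ∞ (testField p ε u φ z i) x :=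
  ContDiffAt.sum fun k _ => (contDiffAt_fderiv_apply (contDiffAt_flux hε hu i) _).mul
    ((hφ.pow 2).mul ((contDiffAt_grad hu k).sub contDiffAt_const))

theorem mu_rpow (hε : 0 < ε) :
    mu ε u x ^ (p - 2) = ((∑ j, grad u x j ^ 2) + ε) ^ ((p - 2) / 2) := by
  rw [mu, Real.sqrt_eq_rpow, ← Real.rpow_mul (weight_pos hε x).le]
  congr 1; ring

theorem fderiv_grad (i k : Fin n) :
    fderiv ℝ (fun y => grad u y i) x (Pi.single k 1) = hess u x k i := rfl

theorem hess_comm (hu : ContDiffAt ℝ ∞ u x) (i k : Fin n) : hess u x i k = hess u x k i :=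
  fderiv_fderiv_comm hu _ _

theorem fderiv_flux (hε : 0 < ε) (hu : ContDiffAt ℝ ∞ u x) (i k : Fin n) :
    fderiv ℝ (flux p ε u i) x (Pi.single k 1) = mu ε u x ^ (p - 2) *
      (hess u x k i + (p - 2) / ((∑ j, grad u x j ^ 2) + ε)
        * (∑ j, grad u x j * hess u x k j) * grad u x i) := by
  have hS := weight_pos (u := u) hε x
  have hg : ∀ j, HasFDerivAt (fun y => grad u y j) (fderiv ℝ (fun y => grad u y j) x) x :=
    fun j => ((contDiffAt_grad hu j).differentiableAt (by simp)).hasFDerivAt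
  have hw := (HasFDerivAt.fun_sum (u := Finset.univ) fun j _ => (hg j).pow 2).add_const ε
  have hV := (hw.rpow_const (p := (p - 2) / 2) (Or.inl hS.ne')).mul (hg i)
  have hV' : HasFDerivAt (flux p ε u i) _ x := hV
  rw [hV'.fderiv, mu_rpow hε, Real.rpow_sub_one hS.ne']
  simp only [_root_.add_apply, _root_.smul_apply,
    _root_.sum_apply, fderiv_grad, smul_eq_mul]
  have : ∑ j, (2 • grad u x j ^ (2 - 1)) * hess u x k j
      = 2 * ∑ j, grad u x j * hess u x k j := by
    rw [Finset.mul_sum]; exact Finset.sum_congr rfl fun j _ => by simp; ring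
  rw [this]
  field_simp

theorem fderiv_testField (hε : 0 < ε) (hu : ContDiffAt ℝ ∞ u x) (hφ : ContDiffAt ℝ ∞ φ x)
    (z : Fin n → ℝ) (i : Fin n) :
    fderiv ℝ (testField p ε u φ z i) x (Pi.single i 1) = ∑ k,
      (fderiv ℝ (fun y => fderiv ℝ (flux p ε u i) y (Pi.single k 1)) x (Pi.single i 1)
          * (φ x ^ 2 * (grad u x k - z k))
        + fderiv ℝ (flux p ε u i) x (Pi.single k 1) *
          (φ x ^ 2 * hess u x k i
            + 2 * φ x * fderiv ℝ φ x (Pi.single i 1) * (grad u x k - z k))) := by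
  have hg : ∀ j, HasFDerivAt (fun y => grad u y j) (fderiv ℝ (fun y => grad u y j) x) x :=
    fun j => ((contDiffAt_grad hu j).differentiableAt (by simp)).hasFDerivAt
  have hV : ∀ k, HasFDerivAt (fun y => fderiv ℝ (flux p ε u i) y (Pi.single k 1)) _ x := fun k =>
    ((contDiffAt_fderiv_apply (contDiffAt_flux hε hu i) (Pi.single k 1)).differentiableAt
      (by simp)).hasFDerivAt
  have hφ' := (hφ.differentiableAt (by simp)).hasFDerivAt
  have hG : HasFDerivAt (testField p ε u φ z i) _ x :=
    HasFDerivAt.fun_sum (u := Finset.univ) fun k _ =>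
      (hV k).mul ((hφ'.pow 2).mul ((hg k).sub_const (z k)))
  rw [hG.fderiv]
  simp only [_root_.add_apply, _root_.smul_apply,
    _root_.sum_apply, fderiv_grad, smul_eq_mul]
  refine Finset.sum_congr rfl fun k _ => ?_
  rw [hess_comm hu i k]
  simp
  ring

/-- The derivatives `∂ₖV` of the flux are divergence free. -/
theorem div_fderiv_flux (hε : 0 < ε) {U : Set (Fin n → ℝ)} (hU : IsOpen U)
    (hu : ContDiffOn ℝ ∞ u U) (heq : RegularizedPLaplace p ε u U) (hx : x ∈ U) (k : Fin n) :
    ∑ i, fderiv ℝ (fun y => fderiv ℝ (flux p ε u i) y (Pi.single k 1)) x (Pi.single i 1) = 0 := by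
  have hux := hu.contDiffAt (hU.mem_nhds hx)
  have hz : (fun y => ∑ i, fderiv ℝ (flux p ε u i) y (Pi.single i 1)) =ᶠ[nhds x] fun _ => 0 :=
    Filter.eventually_of_mem (hU.mem_nhds hx) heq
  have hs : HasFDerivAt (fun y => ∑ i, fderiv ℝ (flux p ε u i) y (Pi.single i 1)) _ x :=
    HasFDerivAt.fun_sum (u := Finset.univ) fun i _ =>
      ((contDiffAt_fderiv_apply (contDiffAt_flux hε hux i) (Pi.single i 1)).differentiableAt
        (by simp)).hasFDerivAt
  have h0 := hs.fderiv.symm.trans hz.fderiv_eq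
  have h1 := congrArg (fun L => L (Pi.single k 1)) h0
  simp only [_root_.sum_apply] at h1
  rw [Finset.sum_congr rfl fun i _ => fderiv_fderiv_comm (contDiffAt_flux hε hux i) _ _, h1]
  simp

/-- The pointwise form of the estimate, up to the divergence of `testField`. -/
theorem caccioppoli_pointwise (hp : 1 < p) (hε : 0 < ε) {U : Set (Fin n → ℝ)} (hU : IsOpen U)
    (hu : ContDiffOn ℝ ∞ u U) (heq : RegularizedPLaplace p ε u U) (hx : x ∈ U)
    (hφ : ContDiff ℝ ∞ φ) (z : Fin n → ℝ) :
    min 1 (p - 1) / 2 * (mu ε u x ^ (p - 2) * (∑ i, ∑ j, hess u x i j ^ 2) * φ x ^ 2)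
      - 2 * p * (mu ε u x ^ (p - 2) * (∑ i, (grad u x i - z i) ^ 2) *
              (∑ i, (fderiv ℝ φ x (Pi.single i 1)) ^ 2))
      ≤ ∑ i, fderiv ℝ (testField p ε u φ z i) x (Pi.single i 1) := by
  have hux := hu.contDiffAt (hU.mem_nhds hx)
  have hS := weight_pos (u := u) hε x
  have hm : 0 ≤ mu ε u x ^ (p - 2) := Real.rpow_nonneg (Real.sqrt_nonneg _) _
  have hdiv : ∑ i, fderiv ℝ (testField p ε u φ z i) x (Pi.single i 1)
      = ∑ k, ∑ i, fderiv ℝ (flux p ε u i) x (Pi.single k 1) *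
          (φ x ^ 2 * hess u x k i
            + 2 * φ x * fderiv ℝ φ x (Pi.single i 1) * (grad u x k - z k)) := by
    simp only [fderiv_testField hε hux hφ.contDiffAt]
    rw [Finset.sum_comm]
    refine Finset.sum_congr rfl fun k _ => ?_
    rw [Finset.sum_add_distrib, ← Finset.sum_mul, div_fderiv_flux hε hU hu heq hx, zero_mul,
      zero_add]
  rw [hdiv]
  simp only [fderiv_flux hε hux]
  have key := Finset.sum_le_sum fun k (_ : k ∈ Finset.univ) =>
    mul_le_mul_of_nonneg_left (row_estimate hp (fun i => grad u x i) (fun i => hess u x k i)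
      (fun i => fderiv ℝ φ x (Pi.single i 1)) (φ x) (grad u x k - z k) hS (by linarith)) hm
  refine le_trans (le_of_eq ?_) (key.trans (le_of_eq ?_))
  · rw [← Finset.mul_sum, Finset.sum_sub_distrib, ← Finset.sum_mul, ← Finset.sum_mul,
      ← Finset.mul_sum, ← Finset.mul_sum]
    ring
  · simp only [Finset.mul_sum, mul_assoc]

end Local

/-! ### Integration of compactly supported functions -/

/-- A function with support in a closed subset of `U` is as smooth as it is on `U`. -/
theorem contDiff_of_eq_zero {E : Type*} [NormedAddCommGroup E] [NormedSpace ℝ E] {m : ℕ∞}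
    {f : E → ℝ} {K U : Set E} (hK : IsClosed K) (hKU : K ⊆ U)
    (hf : ∀ x ∈ U, ContDiffAt ℝ m f x) (h0 : ∀ x ∉ K, f x = 0) : ContDiff ℝ m f := by
  rw [contDiff_iff_contDiffAt]
  intro x
  by_cases hx : x ∈ K
  · exact hf x (hKU hx)
  · exact (contDiffAt_const (c := (0 : ℝ))).congr_of_eventuallyEq
      (Filter.eventually_of_mem (hK.isOpen_compl.mem_nhds hx) h0)

theorem integral_fderiv_eq_zero {n : ℕ} {f : (Fin n → ℝ) → ℝ} (hf : ContDiff ℝ ∞ f)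
    (hc : HasCompactSupport f) (v : Fin n → ℝ) :
    Integrable (fun x => fderiv ℝ f x v) ∧ ∫ x, fderiv ℝ f x v = 0 := by
  have hi : Integrable (fun x => fderiv ℝ f x v) :=
    ((hf.continuous_fderiv (by simp)).clm_apply continuous_const).integrable_of_hasCompactSupport
      (hc.fderiv_apply ℝ v)
  refine ⟨hi, ?_⟩
  have := integral_mul_fderiv_eq_neg_fderiv_mul_of_integrable (μ := volume) (v := v)
    (f := fun _ : Fin n → ℝ => (1 : ℝ)) (g := f) (by simp) (by simpa using hi)
    (by simpa using hf.continuous.integrable_of_hasCompactSupport hc)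
    (fun _ _ => by fun_prop) (fun x _ => hf.differentiable (by simp) x)
  simpa using this

/-! ### Integration of the pointwise estimate -/

/-- Basic Caccioppoli estimate: for `n ≥ 2`, `1 < p < ∞`, `ε > 0` and a smooth
solution `u` of the regularized `p`-Laplace equation in an open set `U ⊆ ℝⁿ`, there is
`C = C(p) > 0` such that for all smooth compactly supported `φ` with support in `U` and all
`z ∈ ℝⁿ`, `∫_U μ^{p−2} |D²u|² φ² ≤ C ∫_U μ^{p−2} |Du − z|² |Dφ|²`. -/
theorem caccioppoli_basic (p : ℝ) (hp : 1 < p) :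
    ∃ C > 0, ∀ (n : ℕ), 2 ≤ n → ∀ (ε : ℝ), 0 < ε →
      ∀ (U : Set (Fin n → ℝ)), IsOpen U →
      ∀ (u : (Fin n → ℝ) → ℝ), ContDiffOn ℝ (⊤ : ℕ∞) u U →
      RegularizedPLaplace p ε u U →
      ∀ (φ : (Fin n → ℝ) → ℝ), ContDiff ℝ (⊤ : ℕ∞) φ → HasCompactSupport φ →
        tsupport φ ⊆ U →
      ∀ z : Fin n → ℝ,
      (∫ x in U, mu ε u x ^ (p - 2) * (∑ i, ∑ j, hess u x i j ^ 2) * φ x ^ 2) ≤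
        C * ∫ x in U, mu ε u x ^ (p - 2) * (∑ i, (grad u x i - z i) ^ 2) *
              (∑ i, (fderiv ℝ φ x (Pi.single i 1)) ^ 2) := by
  have hl : 0 < min 1 (p - 1) := lt_min one_pos (by linarith)
  refine ⟨4 * p / min 1 (p - 1), by positivity, ?_⟩
  intro n _ ε hε U hU u hu heq φ hφ hc hs z
  have hux : ∀ x ∈ U, ContDiffAt ℝ ∞ u x := fun x hx => hu.contDiffAt (hU.mem_nhds hx)
  have hφ0 : ∀ x ∉ tsupport φ, φ x = 0 := fun x hx => image_eq_zero_of_notMem_tsupport hx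
  have hdφ0 : ∀ x ∉ tsupport φ, fderiv ℝ φ x = 0 := fun x hx =>
    image_eq_zero_of_notMem_tsupport fun h => hx (tsupport_fderiv_subset ℝ h)
  set F₁ : (Fin n → ℝ) → ℝ := fun x =>
    mu ε u x ^ (p - 2) * (∑ i, ∑ j, hess u x i j ^ 2) * φ x ^ 2 with hF₁
  set F₂ : (Fin n → ℝ) → ℝ := fun x => mu ε u x ^ (p - 2) * (∑ i, (grad u x i - z i) ^ 2) *
    (∑ i, (fderiv ℝ φ x (Pi.single i 1)) ^ 2) with hF₂
  have hF₁0 : ∀ x ∉ tsupport φ, F₁ x = 0 := fun x hx => by simp [hF₁, hφ0 x hx]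
  have hF₂0 : ∀ x ∉ tsupport φ, F₂ x = 0 := fun x hx => by simp [hF₂, hdφ0 x hx]
  have hμ : ∀ x ∈ U, ContDiffAt ℝ ∞ (fun x => mu ε u x ^ (p - 2)) x := fun x hx => by
    simp only [mu_rpow hε]
    exact (contDiffAt_weight (hux x hx)).rpow_const_of_ne (weight_pos hε x).ne'
  have hF₁s : ContDiff ℝ ∞ F₁ := contDiff_of_eq_zero (isClosed_tsupport φ) hs
    (fun x hx => ((hμ x hx).mul (ContDiffAt.sum fun _ _ => ContDiffAt.sum fun _ _ =>
      (contDiffAt_fderiv_apply (contDiffAt_fderiv_apply (hux x hx) _) _).pow 2)).mul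
        (hφ.contDiffAt.pow 2)) hF₁0
  have hF₂s : ContDiff ℝ ∞ F₂ := contDiff_of_eq_zero (isClosed_tsupport φ) hs
    (fun x hx => ((hμ x hx).mul (ContDiffAt.sum fun i _ =>
      ((contDiffAt_grad (hux x hx) i).sub contDiffAt_const).pow 2)).mul
        (ContDiffAt.sum fun i _ => (contDiffAt_fderiv_apply hφ.contDiffAt _).pow 2)) hF₂0
  have hF₁i : Integrable F₁ := hF₁s.continuous.integrable_of_hasCompactSupport
    (HasCompactSupport.intro hc hF₁0)
  have hF₂i : Integrable F₂ := hF₂s.continuous.integrable_of_hasCompactSupport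
    (HasCompactSupport.intro hc hF₂0)
  have hG0 : ∀ i, ∀ x ∉ tsupport φ, testField p ε u φ z i x = 0 := fun i x hx => by
    simp [testField, hφ0 x hx]
  have hG := fun i => integral_fderiv_eq_zero (contDiff_of_eq_zero (isClosed_tsupport φ) hs
    (fun x hx => contDiffAt_testField (p := p) hε (hux x hx) hφ.contDiffAt z i) (hG0 i))
    (HasCompactSupport.intro hc (hG0 i)) (Pi.single i 1)
  have hpt : ∀ x, min 1 (p - 1) / 2 * F₁ x - 2 * p * F₂ x ≤
      ∑ i, fderiv ℝ (testField p ε u φ z i) x (Pi.single i 1) := by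
    intro x
    by_cases hx : x ∈ tsupport φ
    · exact caccioppoli_pointwise hp hε hU hu heq (hs hx) hφ z
    · have : ∀ i, fderiv ℝ (testField p ε u φ z i) x = 0 := fun i => by
        have h : testField p ε u φ z i =ᶠ[nhds x] fun _ => 0 :=
          Filter.eventually_of_mem ((isClosed_tsupport φ).isOpen_compl.mem_nhds hx) (hG0 i)
        rw [h.fderiv_eq]; simp
      simp [hF₁0 x hx, hF₂0 x hx, this]
  have hfin := integral_mono ((hF₁i.const_mul (min 1 (p - 1) / 2)).sub (hF₂i.const_mul (2 * p)))
    (integrable_finsetSum Finset.univ fun i _ => (hG i).1) hpt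
  rw [integral_finsetSum _ fun i _ => (hG i).1, Finset.sum_congr rfl fun i _ => (hG i).2,
    Finset.sum_const_zero] at hfin
  simp only [Pi.sub_apply] at hfin
  rw [integral_sub (hF₁i.const_mul _) (hF₂i.const_mul _), integral_const_mul,
    integral_const_mul] at hfin
  rw [setIntegral_eq_integral_of_forall_compl_eq_zero fun x hx => hF₁0 x fun h => hx (hs h),
    setIntegral_eq_integral_of_forall_compl_eq_zero fun x hx => hF₂0 x fun h => hx (hs h),
    div_mul_eq_mul_div, le_div_iff₀ hl]
  linarith
end

section
/- Let n ≥ 2, 1 < p < ∞, ε > 0, s ∈ ℝ, let U ⊆ ℝⁿ be open, and let u be a smooth function on U satisfying the regularized p-Laplace equation div((|Du|² + ε)^{(p−2)/2} Du) = 0 pointwise in U. Set μ := (|Du|² + ε)^{1/2} and A := I + (p−2)·(Du ⊗ Du)/μ², and let w := μ^{p−2+s} φ² for a smooth compactly supported function φ with support contained in U. Then the identity ∫_U |D²u|² w dx + (p−2+s) ∫_U μ^{−2} |D²u Du|² w dx + s(p−2) ∫_U μ^{−4} (Δ_∞u)² w dx = −2 ∫_U μ^{p−2+s} φ ⟨A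 D²u Du, Dφ⟩ dx holds. -/
/-- The matrix `A := I + (p−2) (Du ⊗ Du)/μ²`. -/
noncomputable def Amat {n : ℕ} (p ε : ℝ) (u : (Fin n → ℝ) → ℝ) (x : Fin n → ℝ) :
    Matrix (Fin n) (Fin n) ℝ :=
  1 + ((p - 2) / ((∑ i, grad u x i ^ 2) + ε)) • Matrix.of (fun i j => grad u x i * grad u x j)

/-! ### Smoothness and calculus of partial derivatives -/

/-- The `i`-th partial derivative; `grad u x i` and `hess u x i j` are by definition
`pd i u x` and `pd i (pd j u) x`. -/
noncomputable def pd {n : ℕ} (i : Fin n) (f : (Fin n → ℝ) → ℝ) (x : Fin n → ℝ) : ℝ :=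
  fderiv ℝ f x (Pi.single i 1)

/-- The quantity `μ² = |Du|² + ε`. -/
noncomputable def muSq {n : ℕ} (ε : ℝ) (u : (Fin n → ℝ) → ℝ) (x : Fin n → ℝ) : ℝ :=
  (∑ j, pd j u x ^ 2) + ε

/-- The `i`-th component of the vector field `D²u Du − (Δu) Du`. -/
noncomputable def fieldV {n : ℕ} (u : (Fin n → ℝ) → ℝ) (i : Fin n) (x : Fin n → ℝ) : ℝ :=
  (∑ j, pd i (pd j u) x * pd j u x) - (∑ j, pd j (pd j u) x) * pd i u x

open scoped ContDiff

lemma muSq_pos {n : ℕ} {ε : ℝ} (hε : 0 < ε) (u : (Fin n → ℝ) → ℝ) (x : Fin n → ℝ) :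
    0 < muSq ε u x := by
  unfold muSq; positivity

lemma mu_rpow_s9 {n : ℕ} {ε : ℝ} (hε : 0 < ε) (u : (Fin n → ℝ) → ℝ) (x : Fin n → ℝ) (r : ℝ) :
    mu ε u x ^ r = muSq ε u x ^ (r / 2) := by
  have h : mu ε u x = Real.sqrt (muSq ε u x) := rfl
  rw [h, Real.sqrt_eq_rpow, ← Real.rpow_mul (muSq_pos hε u x).le]
  congr 1; ring

lemma contDiffAt_pd {n : ℕ} {f : (Fin n → ℝ) → ℝ} {x : Fin n → ℝ} (i : Fin n)
    (hf : ContDiffAt ℝ ∞ f x) : ContDiffAt ℝ ∞ (pd i f) x :=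
  (hf.fderiv_right (m := ∞) (by simp)).clm_apply contDiffAt_const

lemma ContDiffAt.diff {n : ℕ} {f : (Fin n → ℝ) → ℝ} {x : Fin n → ℝ}
    (hf : ContDiffAt ℝ ∞ f x) : DifferentiableAt ℝ f x :=
  hf.differentiableAt (by simp)

lemma contDiffAt_muSq {n : ℕ} {ε : ℝ} {u : (Fin n → ℝ) → ℝ} {x : Fin n → ℝ}
    (hu : ContDiffAt ℝ ∞ u x) : ContDiffAt ℝ ∞ (muSq ε u) x := by
  unfold muSq
  exact (ContDiffAt.sum fun j _ => (contDiffAt_pd j hu).pow 2).add contDiffAt_const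

lemma contDiffAt_muSq_rpow {n : ℕ} {ε : ℝ} (hε : 0 < ε) {u : (Fin n → ℝ) → ℝ} {x : Fin n → ℝ}
    (hu : ContDiffAt ℝ ∞ u x) (r : ℝ) : ContDiffAt ℝ ∞ (fun y => muSq ε u y ^ r) x :=
  (contDiffAt_muSq hu).rpow_const_of_ne (muSq_pos hε u x).ne'

lemma contDiffAt_fieldV {n : ℕ} {u : (Fin n → ℝ) → ℝ} {x : Fin n → ℝ}
    (hu : ContDiffAt ℝ ∞ u x) (i : Fin n) : ContDiffAt ℝ ∞ (fieldV u i) x := by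
  unfold fieldV
  exact (ContDiffAt.sum fun j _ =>
    (contDiffAt_pd i (contDiffAt_pd j hu)).mul (contDiffAt_pd j hu)).sub
    ((ContDiffAt.sum fun j _ => contDiffAt_pd j (contDiffAt_pd j hu)).mul (contDiffAt_pd i hu))

lemma pd_mul {n : ℕ} {f g : (Fin n → ℝ) → ℝ} {x : Fin n → ℝ} (i : Fin n)
    (hf : DifferentiableAt ℝ f x) (hg : DifferentiableAt ℝ g x) :
    pd i (fun y => f y * g y) x = pd i f x * g x + f x * pd i g x := by
  simp [pd, fderiv_fun_mul hf hg]; ring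

lemma pd_sub {n : ℕ} {f g : (Fin n → ℝ) → ℝ} {x : Fin n → ℝ} (i : Fin n)
    (hf : DifferentiableAt ℝ f x) (hg : DifferentiableAt ℝ g x) :
    pd i (fun y => f y - g y) x = pd i f x - pd i g x := by
  simp [pd, fderiv_fun_sub hf hg]

lemma pd_sum {n : ℕ} {f : Fin n → (Fin n → ℝ) → ℝ} {x : Fin n → ℝ} (i : Fin n)
    (hf : ∀ j, DifferentiableAt ℝ (f j) x) :
    pd i (fun y => ∑ j, f j y) x = ∑ j, pd i (f j) x := by
  simp [pd, fderiv_fun_sum fun j _ => hf j]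

lemma pd_comm {n : ℕ} {f : (Fin n → ℝ) → ℝ} {x : Fin n → ℝ} (hf : ContDiffAt ℝ ∞ f x)
    (i j : Fin n) : pd i (pd j f) x = pd j (pd i f) x := by
  have hd : DifferentiableAt ℝ (fderiv ℝ f) x :=
    (hf.fderiv_right (m := ∞) (by simp)).differentiableAt (by simp)
  have key : ∀ v w : Fin n → ℝ,
      fderiv ℝ (fun y => fderiv ℝ f y v) x w = fderiv ℝ (fderiv ℝ f) x w v := by
    intro v w
    rw [fderiv_clm_apply hd (differentiableAt_const v)]
    simp
  have hs : IsSymmSndFDerivAt ℝ f x :=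
    hf.isSymmSndFDerivAt (by rw [minSmoothness_of_isRCLikeNormedField]; exact WithTop.coe_le_coe.2 le_top)
  change fderiv ℝ (fun y => fderiv ℝ f y (Pi.single j 1)) x (Pi.single i 1)
    = fderiv ℝ (fun y => fderiv ℝ f y (Pi.single i 1)) x (Pi.single j 1)
  rw [key, key, hs]

lemma pd_muSq {n : ℕ} {ε : ℝ} {u : (Fin n → ℝ) → ℝ} {x : Fin n → ℝ}
    (hu : ContDiffAt ℝ ∞ u x) (i : Fin n) :
    pd i (muSq ε u) x = 2 * ∑ j, pd i (pd j u) x * pd j u x := by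
  have h : muSq ε u = fun y => (∑ j, pd j u y * pd j u y) - (-ε) := by
    funext y; simp [muSq, sq]
  have hg := fun j => (contDiffAt_pd j hu).diff
  rw [h, pd_sub i (DifferentiableAt.fun_sum fun j _ => (hg j).fun_mul (hg j))
    (differentiableAt_const _), pd_sum i (fun j => (hg j).fun_mul (hg j)), Finset.mul_sum]
  have : pd i (fun _ : Fin n → ℝ => -ε) x = 0 := by simp [pd]
  rw [this, sub_zero]
  refine Finset.sum_congr rfl fun j _ => ?_
  rw [pd_mul i (hg j) (hg j)]; ring

lemma pd_muSq_rpow {n : ℕ} {ε : ℝ} (hε : 0 < ε) {u : (Fin n → ℝ) → ℝ} {x : Fin n → ℝ}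
    (hu : ContDiffAt ℝ ∞ u x) (i : Fin n) (r : ℝ) :
    pd i (fun y => muSq ε u y ^ r) x
      = 2 * r * (muSq ε u x ^ r / muSq ε u x) * ∑ j, pd i (pd j u) x * pd j u x := by
  have h0 := muSq_pos hε u x
  have h := (contDiffAt_muSq (ε := ε) hu).diff.hasFDerivAt.rpow_const (p := r) (Or.inl h0.ne')
  have h2 := pd_muSq (ε := ε) hu i
  unfold pd at h2 ⊢
  rw [h.fderiv, smul_apply, h2, Real.rpow_sub_one h0.ne']
  simp only [smul_eq_mul]; ring

/-! ### Consequences of the equation and the pointwise divergence -/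

/-- Expanding the divergence, the equation becomes `Δu = −(p−2) μ⁻² Δ_∞u`. -/
lemma laplacian_eq {n : ℕ} {p ε : ℝ} (hε : 0 < ε) {u : (Fin n → ℝ) → ℝ}
    {U : Set (Fin n → ℝ)} (heq : RegularizedPLaplace p ε u U) {x : Fin n → ℝ} (hx : x ∈ U)
    (hu : ContDiffAt ℝ ∞ u x) :
    ∑ j, pd j (pd j u) x
      = -((p - 2) / muSq ε u x) * ∑ i, pd i u x * ∑ j, pd i (pd j u) x * pd j u x := by
  have h0 := muSq_pos hε u x
  have h : ∑ i, pd i (fun y => muSq ε u y ^ ((p - 2) / 2) * pd i u y) x = 0 := heq x hx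
  have hc : (0 : ℝ) < muSq ε u x ^ ((p - 2) / 2) := Real.rpow_pos_of_pos h0 _
  have e : ∀ i, pd i (fun y => muSq ε u y ^ ((p - 2) / 2) * pd i u y) x
      = muSq ε u x ^ ((p - 2) / 2) * (pd i (pd i u) x
        + (p - 2) / muSq ε u x * (pd i u x * ∑ j, pd i (pd j u) x * pd j u x)) := by
    intro i
    rw [pd_mul i (contDiffAt_muSq_rpow hε hu _).diff (contDiffAt_pd i hu).diff,
      pd_muSq_rpow hε hu]
    ring
  simp_rw [e, ← Finset.mul_sum, Finset.sum_add_distrib] at h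
  rw [← Finset.mul_sum] at h
  have := (mul_eq_zero.1 h).resolve_left hc.ne'
  linarith

/-- The third derivatives of `u` cancel in the divergence of `D²u Du − (Δu) Du`, leaving
`|D²u|² − (Δu)²`. -/
lemma div_fieldV {n : ℕ} {u : (Fin n → ℝ) → ℝ} {x : Fin n → ℝ}
    (hev : ∀ᶠ y in nhds x, ContDiffAt ℝ ∞ u y) :
    ∑ i, pd i (fieldV u i) x
      = (∑ i, ∑ j, pd i (pd j u) x ^ 2) - (∑ j, pd j (pd j u) x) ^ 2 := by
  have hu := hev.self_of_nhds
  have hg := fun j => (contDiffAt_pd j hu).diff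
  have hH := fun i j => (contDiffAt_pd i (contDiffAt_pd j hu)).diff
  have e : ∀ i, pd i (fieldV u i) x
      = (∑ j, pd i (pd j u) x ^ 2) - (∑ j, pd j (pd j u) x) * pd i (pd i u) x
        + ((∑ j, pd i (pd i (pd j u)) x * pd j u x)
          - ∑ j, pd i (pd j (pd j u)) x * pd i u x) := by
    intro i
    unfold fieldV
    rw [pd_sub i (DifferentiableAt.fun_sum fun j _ => (hH i j).fun_mul (hg j))
      ((DifferentiableAt.fun_sum fun j _ => hH j j).fun_mul (hg i)),
      pd_sum i (fun j => (hH i j).fun_mul (hg j)),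
      pd_mul i (DifferentiableAt.fun_sum fun j _ => hH j j) (hg i), pd_sum i (fun j => hH j j)]
    have : ∀ j, pd i (fun y => pd i (pd j u) y * pd j u y) x
        = pd i (pd i (pd j u)) x * pd j u x + pd i (pd j u) x ^ 2 := by
      intro j; rw [pd_mul i (hH i j) (hg j)]; ring
    simp_rw [this, Finset.sum_add_distrib, Finset.sum_mul]
    ring
  have third : ∀ i j, pd i (pd i (pd j u)) x = pd j (pd i (pd i u)) x := by
    intro i j
    have he : pd i (pd j u) =ᶠ[nhds x] pd j (pd i u) := by
      filter_upwards [hev] with y hy using pd_comm hy i j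
    have : pd i (pd i (pd j u)) x = pd i (pd j (pd i u)) x := by
      unfold pd at he ⊢; rw [he.fderiv_eq]
    rw [this, pd_comm (contDiffAt_pd i hu)]
  have cancel : ∑ i, ∑ j, pd i (pd i (pd j u)) x * pd j u x
      = ∑ i, ∑ j, pd i (pd j (pd j u)) x * pd i u x := by
    rw [Finset.sum_comm]
    exact Finset.sum_congr rfl fun j _ => Finset.sum_congr rfl fun i _ => by rw [third i j]
  simp_rw [e, Finset.sum_add_distrib, Finset.sum_sub_distrib]
  rw [cancel, ← Finset.mul_sum]
  ring

lemma Amat_mulVec {n : ℕ} (p ε : ℝ) (u : (Fin n → ℝ) → ℝ) (x h : Fin n → ℝ) (i : Fin n) :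
    (Amat p ε u x).mulVec h i
      = h i + (p - 2) / muSq ε u x * (∑ j, pd j u x * h j) * pd i u x := by
  have hA : Amat p ε u x
      = 1 + ((p - 2) / muSq ε u x) • Matrix.of (fun i j => pd i u x * pd j u x) := rfl
  rw [hA, Matrix.add_mulVec, Matrix.one_mulVec, Matrix.smul_mulVec]
  simp only [Pi.add_apply, Pi.smul_apply, smul_eq_mul, Matrix.mulVec, dotProduct, Matrix.of_apply,
    mul_assoc, ← Finset.mul_sum]
  ring

/-- The `i`-th component of `μ^{p−2+s} φ² (D²u Du − (Δu) Du)`, the field whose divergence is the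
integrand of the identity. The factor `φ²` is split as `φ · φ`, so that the field is a function
smooth on `U` times the cutoff `φ`. -/
noncomputable def fieldF {n : ℕ} (p ε s : ℝ) (u φ : (Fin n → ℝ) → ℝ) (i : Fin n)
    (x : Fin n → ℝ) : ℝ :=
  muSq ε u x ^ ((p - 2 + s) / 2) * φ x * fieldV u i x * φ x

/-- The divergence of `fieldF`. The equation enters twice: it turns `D²u Du − (Δu) Du` into
`A D²u Du`, and `(Δu)²` into `(p−2)² μ⁻⁴ (Δ_∞u)²`. -/
lemma div_fieldF {n : ℕ} {p ε s : ℝ} (hε : 0 < ε) {u φ : (Fin n → ℝ) → ℝ}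
    {U : Set (Fin n → ℝ)} (heq : RegularizedPLaplace p ε u U) {x : Fin n → ℝ} (hx : x ∈ U)
    (hev : ∀ᶠ y in nhds x, ContDiffAt ℝ ∞ u y) (hφ : ContDiffAt ℝ ∞ φ x) :
    ∑ i, pd i (fieldF p ε s u φ i) x
      = (∑ i, ∑ j, hess u x i j ^ 2) * (mu ε u x ^ (p - 2 + s) * φ x ^ 2)
      + (p - 2 + s) * (mu ε u x ^ (-2 : ℝ)
          * (∑ i, ((hess u x).mulVec (grad u x) i) ^ 2)
          * (mu ε u x ^ (p - 2 + s) * φ x ^ 2))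
      + s * (p - 2) * (mu ε u x ^ (-4 : ℝ)
          * (∑ i, grad u x i * (hess u x).mulVec (grad u x) i) ^ 2
          * (mu ε u x ^ (p - 2 + s) * φ x ^ 2))
      + 2 * (mu ε u x ^ (p - 2 + s) * φ x
        * (∑ i, (Amat p ε u x).mulVec ((hess u x).mulVec (grad u x)) i
            * fderiv ℝ φ x (Pi.single i 1))) := by
  have hu := hev.self_of_nhds
  have h0 := muSq_pos hε u x
  have hL := laplacian_eq hε heq hx hu
  have hdV := div_fieldV hev
  have hVx : ∀ i, fieldV u i x = (∑ j, pd i (pd j u) x * pd j u x)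
      - (∑ j, pd j (pd j u) x) * pd i u x := fun i => rfl
  have hF : ∀ i, pd i (fieldF p ε s u φ i) x
      = ((p - 2 + s) * (muSq ε u x ^ ((p - 2 + s) / 2) / muSq ε u x)
          * (∑ j, pd i (pd j u) x * pd j u x) * φ x ^ 2
          + muSq ε u x ^ ((p - 2 + s) / 2) * (2 * φ x * pd i φ x)) * fieldV u i x
        + muSq ε u x ^ ((p - 2 + s) / 2) * φ x ^ 2 * pd i (fieldV u i) x := by
    intro i
    have h1 := contDiffAt_muSq_rpow hε hu ((p - 2 + s) / 2)
    have h2 := contDiffAt_fieldV hu i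
    unfold fieldF
    rw [pd_mul i ((h1.mul hφ).mul h2).diff hφ.diff, pd_mul i (h1.mul hφ).diff h2.diff,
      pd_mul i h1.diff hφ.diff, pd_muSq_rpow hε hu]
    ring
  have hgr : ∀ i, grad u x i = pd i u x := fun i => rfl
  have hHG : ∀ i, (hess u x).mulVec (grad u x) i = ∑ j, pd i (pd j u) x * pd j u x :=
    fun i => rfl
  have hH : ∀ i j, hess u x i j = pd i (pd j u) x := fun i j => rfl
  have hp2 : mu ε u x ^ (-2 : ℝ) = (muSq ε u x)⁻¹ := by
    rw [mu_rpow_s9 hε, show (-2 : ℝ) / 2 = -1 by norm_num, Real.rpow_neg_one]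
  have hp4 : mu ε u x ^ (-4 : ℝ) = ((muSq ε u x) ^ 2)⁻¹ := by
    rw [mu_rpow_s9 hε, show (-4 : ℝ) / 2 = -(2 : ℕ) by norm_num, Real.rpow_neg h0.le,
      Real.rpow_natCast]
  have hD : ∀ i, fderiv ℝ φ x (Pi.single i 1) = pd i φ x := fun i => rfl
  simp_rw [Amat_mulVec, hgr, hHG, hH, hD, hp2, hp4, mu_rpow_s9 hε u x (p - 2 + s)]
  simp_rw [hF, hVx]
  rw [Finset.sum_add_distrib, ← Finset.mul_sum, hdV, hL]
  generalize (∑ i, ∑ j, pd i (pd j u) x ^ 2) = S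
  generalize muSq ε u x ^ ((p - 2 + s) / 2) = c
  generalize muSq ε u x = Q at h0 ⊢
  generalize hh : (fun i => ∑ j, pd i (pd j u) x * pd j u x) = h
  have hh' : ∀ i, ∑ j, pd i (pd j u) x * pd j u x = h i := fun i => congrFun hh i
  simp_rw [hh']
  obtain ⟨m, hm⟩ : ∃ m, m = ∑ i, pd i u x * h i := ⟨_, rfl⟩
  rw [← hm]
  have e : ∀ i, ((p - 2 + s) * (c / Q) * h i * φ x ^ 2 + c * (2 * φ x * pd i φ x))
        * (h i - -((p - 2) / Q) * m * pd i u x)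
      = (p - 2 + s) * (c / Q) * φ x ^ 2 * h i ^ 2
        + (p - 2 + s) * (c / Q) * φ x ^ 2 * ((p - 2) / Q) * m * (pd i u x * h i)
        + 2 * c * φ x * ((h i + (p - 2) / Q * m * pd i u x) * pd i φ x) := by
    intro i; ring
  simp_rw [e, Finset.sum_add_distrib, ← Finset.mul_sum]
  rw [← hm]
  generalize (∑ i, (h i + (p - 2) / Q * m * pd i u x) * pd i φ x) = R
  field_simp
  ring

/-! ### Integration over `U` -/

/-- A function that is smooth on `U`, cut off by a test function supported in `U`, is smooth on
the whole space and compactly supported. -/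
lemma cutoff {n : ℕ} {U : Set (Fin n → ℝ)} {φ G : (Fin n → ℝ) → ℝ} (hφ₁ : ContDiff ℝ ∞ φ)
    (hφ₂ : HasCompactSupport φ) (hφ₃ : tsupport φ ⊆ U) (hG : ∀ x ∈ U, ContDiffAt ℝ ∞ G x) :
    ContDiff ℝ ∞ (fun x => G x * φ x) ∧ HasCompactSupport (fun x => G x * φ x) := by
  refine ⟨contDiff_iff_contDiffAt.2 fun x => ?_, hφ₂.mul_left⟩
  by_cases hx : x ∈ tsupport φ
  · exact (hG x (hφ₃ hx)).mul hφ₁.contDiffAt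
  · refine (contDiffAt_const (c := (0 : ℝ))).congr_of_eventuallyEq ?_
    filter_upwards [notMem_tsupport_iff_eventuallyEq.1 hx] with y hy
    simp [hy]

lemma integral_pd_eq_zero {n : ℕ} {F : (Fin n → ℝ) → ℝ} (hF : ContDiff ℝ ∞ F)
    (hc : HasCompactSupport F) (i : Fin n) :
    MeasureTheory.Integrable (pd i F) ∧ ∫ x, pd i F x = 0 := by
  have hi : MeasureTheory.Integrable (pd i F) :=
    ((hF.continuous_fderiv (by simp)).clm_apply continuous_const).integrable_of_hasCompactSupport
      (hc.fderiv_apply ℝ _)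
  refine ⟨hi, ?_⟩
  have h := integral_mul_fderiv_eq_neg_fderiv_mul_of_integrable
    (μ := MeasureTheory.volume) (f := F) (g := fun _ => (1 : ℝ)) (v := Pi.single i 1)
    (by simp only [mul_one]; exact hi) (by simp)
    (by simpa using hF.continuous.integrable_of_hasCompactSupport hc)
    (fun x _ => (hF.differentiable (by simp)) x) (fun x _ => differentiableAt_const _)
  simpa [pd] using h

lemma setIntegral_lincomb {n : ℕ} {E₁ E₂ E₃ E₄ : (Fin n → ℝ) → ℝ} (U : Set (Fin n → ℝ))
    (a b c : ℝ) (h₁ : MeasureTheory.Integrable E₁) (h₂ : MeasureTheory.Integrable E₂)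
    (h₃ : MeasureTheory.Integrable E₃) (h₄ : MeasureTheory.Integrable E₄) :
    ∫ x in U, (E₁ x + a * E₂ x + b * E₃ x + c * E₄ x)
      = (∫ x in U, E₁ x) + a * (∫ x in U, E₂ x) + b * (∫ x in U, E₃ x)
        + c * ∫ x in U, E₄ x := by
  have j₂ : MeasureTheory.Integrable fun x => E₁ x + a * E₂ x := h₁.add (h₂.const_mul a)
  have j₃ : MeasureTheory.Integrable fun x => E₁ x + a * E₂ x + b * E₃ x :=
    j₂.add (h₃.const_mul b)
  rw [MeasureTheory.integral_add j₃.integrableOn (h₄.const_mul c).integrableOn,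
    MeasureTheory.integral_add j₂.integrableOn (h₃.const_mul b).integrableOn,
    MeasureTheory.integral_add h₁.integrableOn (h₂.const_mul a).integrableOn,
    MeasureTheory.integral_const_mul, MeasureTheory.integral_const_mul,
    MeasureTheory.integral_const_mul]

/-- The Caccioppoli-type identity: with `w := μ^{p−2+s} φ²`,
`∫_U |D²u|² w + (p−2+s) ∫_U μ⁻² |D²u Du|² w + s(p−2) ∫_U μ⁻⁴ (Δ_∞u)² w
  = −2 ∫_U μ^{p−2+s} φ ⟨A D²u Du, Dφ⟩`. -/
theorem caccioppoli_identity (n : ℕ) (hn : 2 ≤ n) (p : ℝ) (hp : 1 < p)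
    (ε : ℝ) (hε : 0 < ε) (s : ℝ) (U : Set (Fin n → ℝ)) (hU : IsOpen U)
    (u : (Fin n → ℝ) → ℝ) (hu : ContDiffOn ℝ (⊤ : ℕ∞) u U)
    (heq : RegularizedPLaplace p ε u U)
    (φ : (Fin n → ℝ) → ℝ) (hφ₁ : ContDiff ℝ (⊤ : ℕ∞) φ) (hφ₂ : HasCompactSupport φ)
    (hφ₃ : tsupport φ ⊆ U) :
    (∫ x in U, (∑ i, ∑ j, hess u x i j ^ 2) * (mu ε u x ^ (p - 2 + s) * φ x ^ 2))
      + (p - 2 + s) * (∫ x in U, mu ε u x ^ (-2 : ℝ)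
          * (∑ i, ((hess u x).mulVec (grad u x) i) ^ 2)
          * (mu ε u x ^ (p - 2 + s) * φ x ^ 2))
      + s * (p - 2) * (∫ x in U, mu ε u x ^ (-4 : ℝ)
          * (∑ i, grad u x i * (hess u x).mulVec (grad u x) i) ^ 2
          * (mu ε u x ^ (p - 2 + s) * φ x ^ 2))
    = -2 * ∫ x in U, mu ε u x ^ (p - 2 + s) * φ x
        * (∑ i, (Amat p ε u x).mulVec ((hess u x).mulVec (grad u x)) i
            * fderiv ℝ φ x (Pi.single i 1)) := by
  have hsm : ∀ x ∈ U, ContDiffAt ℝ ∞ u x := fun x hx => hu.contDiffAt (hU.mem_nhds hx)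
  have hintegr : ∀ G E : (Fin n → ℝ) → ℝ, (∀ x ∈ U, ContDiffAt ℝ ∞ G x) →
      (∀ x, E x = G x * φ x) → MeasureTheory.Integrable E := by
    intro G E hG hE
    obtain ⟨h1, h2⟩ := cutoff hφ₁ hφ₂ hφ₃ hG
    rw [funext hE]
    exact h1.continuous.integrable_of_hasCompactSupport h2
  have hg : ∀ i, ∀ x ∈ U, ContDiffAt ℝ ∞ (pd i u) x := fun i x hx => contDiffAt_pd i (hsm x hx)
  have hH : ∀ i j, ∀ x ∈ U, ContDiffAt ℝ ∞ (pd i (pd j u)) x :=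
    fun i j x hx => contDiffAt_pd i (hg j x hx)
  have hHG : ∀ i, ∀ x ∈ U, ContDiffAt ℝ ∞ (fun y => (hess u y).mulVec (grad u y) i) x :=
    fun i x hx => show ContDiffAt ℝ ∞ (fun y => ∑ j, pd i (pd j u) y * pd j u y) x from
      ContDiffAt.sum fun j _ => (hH i j x hx).mul (hg j x hx)
  have hm : ∀ x ∈ U, ContDiffAt ℝ ∞
      (fun y => ∑ i, grad u y i * (hess u y).mulVec (grad u y) i) x :=
    fun x hx => ContDiffAt.sum fun i _ => (hg i x hx).mul (hHG i x hx)
  have hmu : ∀ r : ℝ, ∀ x ∈ U, ContDiffAt ℝ ∞ (fun y => mu ε u y ^ r) x := by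
    intro r x hx
    simp_rw [mu_rpow_s9 hε]
    exact contDiffAt_muSq_rpow hε (hsm x hx) _
  have hw : ∀ x ∈ U, ContDiffAt ℝ ∞ (fun y => mu ε u y ^ (p - 2 + s) * φ y) x :=
    fun x hx => (hmu _ x hx).mul hφ₁.contDiffAt
  have i1 : MeasureTheory.Integrable fun x =>
      (∑ i, ∑ j, hess u x i j ^ 2) * (mu ε u x ^ (p - 2 + s) * φ x ^ 2) :=
    hintegr (fun x => (∑ i, ∑ j, hess u x i j ^ 2) * (mu ε u x ^ (p - 2 + s) * φ x)) _
      (fun x hx => (ContDiffAt.sum fun i _ => ContDiffAt.sum fun j _ =>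
        (hH i j x hx).pow 2).mul (hw x hx)) (fun x => by ring)
  have i2 : MeasureTheory.Integrable fun x => mu ε u x ^ (-2 : ℝ)
      * (∑ i, ((hess u x).mulVec (grad u x) i) ^ 2) * (mu ε u x ^ (p - 2 + s) * φ x ^ 2) :=
    hintegr (fun x => mu ε u x ^ (-2 : ℝ) * (∑ i, ((hess u x).mulVec (grad u x) i) ^ 2)
        * (mu ε u x ^ (p - 2 + s) * φ x)) _
      (fun x hx => ((hmu _ x hx).mul (ContDiffAt.sum fun i _ => (hHG i x hx).pow 2)).mul
        (hw x hx)) (fun x => by ring)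
  have i3 : MeasureTheory.Integrable fun x => mu ε u x ^ (-4 : ℝ)
      * (∑ i, grad u x i * (hess u x).mulVec (grad u x) i) ^ 2
      * (mu ε u x ^ (p - 2 + s) * φ x ^ 2) :=
    hintegr (fun x => mu ε u x ^ (-4 : ℝ)
        * (∑ i, grad u x i * (hess u x).mulVec (grad u x) i) ^ 2
        * (mu ε u x ^ (p - 2 + s) * φ x)) _
      (fun x hx => ((hmu _ x hx).mul ((hm x hx).pow 2)).mul (hw x hx)) (fun x => by ring)
  have i4 : MeasureTheory.Integrable fun x => mu ε u x ^ (p - 2 + s) * φ x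
      * (∑ i, (Amat p ε u x).mulVec ((hess u x).mulVec (grad u x)) i
          * fderiv ℝ φ x (Pi.single i 1)) := by
    refine hintegr (fun x => mu ε u x ^ (p - 2 + s)
      * (∑ i, ((hess u x).mulVec (grad u x) i + (p - 2) * muSq ε u x ^ (-1 : ℝ)
          * (∑ j, grad u x j * (hess u x).mulVec (grad u x) j) * grad u x i) * pd i φ x)) _
      (fun x hx => (hmu _ x hx).mul (ContDiffAt.sum fun i _ =>
        ((hHG i x hx).add (((contDiffAt_const.mul
          (contDiffAt_muSq_rpow hε (hsm x hx) _)).mul (hm x hx)).mul (hg i x hx))).mul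
          (contDiffAt_pd i hφ₁.contDiffAt))) (fun x => ?_)
    simp_rw [Amat_mulVec, Real.rpow_neg_one, ← div_eq_mul_inv]
    exact mul_right_comm _ _ _
  have hF : ∀ i, ContDiff ℝ ∞ (fieldF p ε s u φ i) ∧ HasCompactSupport (fieldF p ε s u φ i) :=
    fun i => cutoff hφ₁ hφ₂ hφ₃ fun x hx =>
      ((contDiffAt_muSq_rpow hε (hsm x hx) _).mul hφ₁.contDiffAt).mul
        (contDiffAt_fieldV (hsm x hx) i)
  have hdiv : ∫ x in U, ∑ i, pd i (fieldF p ε s u φ i) x = 0 := by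
    rw [MeasureTheory.setIntegral_eq_integral_of_forall_compl_eq_zero,
      MeasureTheory.integral_finsetSum _
        fun i _ => (integral_pd_eq_zero (hF i).1 (hF i).2 i).1]
    · exact Finset.sum_eq_zero fun i _ => (integral_pd_eq_zero (hF i).1 (hF i).2 i).2
    · intro x hx
      refine Finset.sum_eq_zero fun i _ => ?_
      have hts : x ∉ tsupport (fieldF p ε s u φ i) := fun h =>
        hx (hφ₃ (tsupport_mul_subset_right h))
      have := image_eq_zero_of_notMem_tsupport
        fun h => hts (tsupport_fderiv_apply_subset ℝ (Pi.single i 1) h)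
      exact this
  have hsplit := MeasureTheory.setIntegral_congr_fun (μ := MeasureTheory.volume) hU.measurableSet
    fun x hx => div_fieldF (s := s) hε heq hx ((hU.eventually_mem hx).mono hsm) hφ₁.contDiffAt
  have hlin := hsplit.symm.trans hdiv
  have hfour := setIntegral_lincomb U (p - 2 + s) (s * (p - 2)) 2 i1 i2 i3 i4
  linarith [hfour.symm.trans hlin]
end

section
/- Let n ≥ 2, 1 < p < ∞, ε > 0, let U ⊆ ℝⁿ be open, let u be a smooth function on U, and let x ∈ U be a point where Du(x) ≠ 0 and where the non-divergence form equation Δu + (p−2)·Δ_∞u/(|Du|² + ε) = 0 holds. Set μ := (|Du(x)|² + ε)^{1/2}. Then at x one has |D²u|² ≥ 2·|D²u Du|²/|Du|² + Φ·(Δ_∞u)²/|Du|⁴, where Φ := (p−1)²/(n−1) − 1 − (ε/μ²)·2(p−1)(p−2)/(n−1) + (ε²/μ⁴)·(p−2)²/(n−1). Moreover, if n = 2 then equality holds in place of the inequality. -/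
lemma hess_symm {n : ℕ} {u : (Fin n → ℝ) → ℝ} {x : Fin n → ℝ} (hu : ContDiffAt ℝ 2 u x)
    (i j : Fin n) : hess u x i j = hess u x j i := by
  have hd : DifferentiableAt ℝ (fderiv ℝ u) x :=
    (hu.fderiv_right (m := 1) (by norm_num)).differentiableAt (by norm_num)
  have key : ∀ i j : Fin n,
      hess u x i j = fderiv ℝ (fderiv ℝ u) x (Pi.single i 1) (Pi.single j 1) := by
    intro i j
    simp only [hess, Matrix.of_apply]
    rw [fderiv_clm_apply hd (differentiableAt_const _)]
    simp
  have hs : IsSymmSndFDerivAt ℝ u x := hu.isSymmSndFDerivAt (by simp)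
  rw [key, key, hs.eq]

/-- Cauchy–Schwarz for the trace of the compression of a symmetric `A` to `g^⊥`. With
`ν = g / |g|` and `B = (I - ν νᵀ) A (I - ν νᵀ)` it reads `(tr B)² / (n - 1) ≤ |B|²`, where
`tr B = tr A - ⟨ν, A ν⟩` and `|B|² = |A|² - 2 |A ν|² + ⟨ν, A ν⟩²`; here it is multiplied
by `|g|⁴`. -/
lemma trace_sq_bound {n : ℕ} (A : Matrix (Fin n) (Fin n) ℝ)
    (hA : ∀ i j, A i j = A j i) (g : Fin n → ℝ) (hn : 2 ≤ n) (hg : 0 < ∑ i, g i ^ 2) :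
    ((∑ i, g i ^ 2) * A.trace - ∑ i, g i * A.mulVec g i) ^ 2 / ((n : ℝ) - 1) ≤
      (∑ i, g i ^ 2) ^ 2 * (∑ i, ∑ j, A i j ^ 2)
        - 2 * (∑ i, g i ^ 2) * (∑ i, (A.mulVec g i) ^ 2) + (∑ i, g i * A.mulVec g i) ^ 2 := by
  have hn1 : (0 : ℝ) < (n : ℝ) - 1 := by
    have : (2 : ℝ) ≤ n := by exact_mod_cast hn
    linarith
  have hAt : A.transpose = A := by ext i j; exact hA j i
  have e1 : (∑ i, g i ^ 2) = g ⬝ᵥ g := by simp [dotProduct, sq]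
  have e2 : (∑ i, g i * A.mulVec g i) = g ⬝ᵥ A.mulVec g := rfl
  have e3 : (∑ i, (A.mulVec g i) ^ 2) = A.mulVec g ⬝ᵥ A.mulVec g := by simp [dotProduct, sq]
  have hfro : ∀ M : Matrix (Fin n) (Fin n) ℝ,
      (∑ i, ∑ j, M i j ^ 2) = (M * M.transpose).trace := by
    intro M
    simp [Matrix.trace, Matrix.mul_apply, sq]
  have e4 := hfro A
  rw [hAt] at e4
  have hvm : Matrix.vecMul g A = A.mulVec g := by
    rw [← Matrix.mulVec_transpose, hAt]
  have hAw : A.mulVec (A.mulVec g) ⬝ᵥ g = A.mulVec g ⬝ᵥ A.mulVec g := by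
    rw [dotProduct_comm, Matrix.dotProduct_mulVec, hvm]
  have hwA : g ⬝ᵥ Matrix.vecMul (A.mulVec g) A = A.mulVec g ⬝ᵥ A.mulVec g := by
    rw [← Matrix.mulVec_transpose, hAt, Matrix.dotProduct_mulVec, hvm]
  rw [e1] at hg
  rw [e1, e2, e3, e4]
  set w := A.mulVec g with hw
  set G := g ⬝ᵥ g with hG
  set D := g ⬝ᵥ w with hD
  have hwg : w ⬝ᵥ g = D := dotProduct_comm _ _
  set s := (G * A.trace - D) / ((n : ℝ) - 1) with hs
  have hs' : s * ((n : ℝ) - 1) = G * A.trace - D := by rw [hs]; field_simp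
  -- `C` is `G²` times the trace-free part `B - (tr B / (n - 1)) (I - ν νᵀ)` of `B` on `g^⊥`,
  -- so the bound is the nonnegativity of `|C|² = tr (C * C)`.
  let C : Matrix (Fin n) (Fin n) ℝ :=
    G ^ 2 • A - G • Matrix.vecMulVec g w - G • Matrix.vecMulVec w g
      + (D + s) • Matrix.vecMulVec g g - (s * G) • 1
  have hCt : C.transpose = C := by
    simp only [C, Matrix.transpose_sub, Matrix.transpose_add, Matrix.transpose_smul,
      Matrix.transpose_vecMulVec, hAt, Matrix.transpose_one]
    abel
  have hC : 0 ≤ (C * C).trace := by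
    have := hfro C
    rw [hCt] at this
    rw [← this]
    positivity
  have hCC : (C * C).trace = G ^ 2 * (G ^ 2 * (A * A).trace - 2 * G * (w ⬝ᵥ w) + D ^ 2
      - (G * A.trace - D) ^ 2 / ((n : ℝ) - 1)) := by
    have : (G * A.trace - D) ^ 2 / ((n : ℝ) - 1) = s * (G * A.trace - D) := by
      rw [hs]; ring
    rw [this]
    simp only [C, Matrix.mul_sub, Matrix.sub_mul, Matrix.mul_add, Matrix.add_mul,
      Matrix.smul_mul, Matrix.mul_smul, Matrix.trace_sub, Matrix.trace_add, Matrix.trace_smul,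
      Matrix.mul_vecMulVec, Matrix.vecMulVec_mul, hvm, Matrix.trace_vecMulVec,
      Matrix.sub_mulVec, Matrix.add_mulVec, Matrix.smul_mulVec, Matrix.vecMulVec_mulVec,
      Matrix.one_mulVec, sub_dotProduct, add_dotProduct, smul_dotProduct, ← hw, op_smul_eq_smul,
      Matrix.mul_one, Matrix.one_mul,
      Matrix.trace_one, smul_eq_mul, Fintype.card_fin, ← hG, ← hD, hwg, hAw, hwA]
    linear_combination (s * G ^ 2) * hs'
  rw [hCC] at hC
  have := nonneg_of_mul_nonneg_right hC (by positivity)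
  linarith

/-- In dimension two the compression of `A` to the line `g^⊥` is a single number, so its
squared norm is the square of its trace. -/
lemma trace_sq_eq (A : Matrix (Fin 2) (Fin 2) ℝ)
    (hA : ∀ i j, A i j = A j i) (g : Fin 2 → ℝ) :
    (∑ i, g i ^ 2) ^ 2 * (∑ i, ∑ j, A i j ^ 2)
        - 2 * (∑ i, g i ^ 2) * (∑ i, (A.mulVec g i) ^ 2) + (∑ i, g i * A.mulVec g i) ^ 2 =
      ((∑ i, g i ^ 2) * A.trace - ∑ i, g i * A.mulVec g i) ^ 2 := by
  simp only [Fin.sum_univ_two, Matrix.trace_fin_two, Matrix.mulVec, dotProduct, hA 1 0]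
  ring

/-- The equation for the trace turns the coefficient `Φ` into `(tr B)² / m`, up to scaling:
the claimed inequality times `|g|⁴` is `trace_sq_bound`. Here `G = |g|²`, `D = ⟨g, A g⟩`,
`L = |A g|²`, `N = |A|²`, `T = tr A` and `m = n - 1`. -/
lemma rhs_eq {m p ε G D L N T : ℝ} (hm : m ≠ 0) (hG : 0 < G) (hε : 0 < ε)
    (heq : T + (p - 2) * D / (G + ε) = 0) :
    G ^ 2 * (N - (2 * L / G + ((p - 1) ^ 2 / m - 1
              - (ε / (G + ε)) * (2 * (p - 1) * (p - 2) / m)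
              + (ε ^ 2 / (G + ε) ^ 2) * ((p - 2) ^ 2 / m)) * D ^ 2 / G ^ 2)) =
      G ^ 2 * N - 2 * G * L + D ^ 2 - (G * T - D) ^ 2 / m := by
  have h : G + ε ≠ 0 := by positivity
  obtain rfl : T = -((p - 2) * D / (G + ε)) := by linarith
  field_simp
  ring

/-- Lower bound for `|D²u|²` at a point `x` where `Du(x) ≠ 0` and the
non-divergence form equation `Δu + (p−2) Δ_∞u/(|Du|² + ε) = 0` holds:
`|D²u|² ≥ 2 |D²u Du|²/|Du|² + Φ (Δ_∞u)²/|Du|⁴`, with equality when `n = 2`, where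
`Φ := (p−1)²/(n−1) − 1 − (ε/μ²) · 2(p−1)(p−2)/(n−1) + (ε²/μ⁴) · (p−2)²/(n−1)` and
`μ² = |Du(x)|² + ε`. -/
theorem pointwise_lower_bound_for_hessian (n : ℕ) (hn : 2 ≤ n) (p : ℝ) (hp : 1 < p)
    (ε : ℝ) (hε : 0 < ε) (U : Set (Fin n → ℝ)) (hU : IsOpen U)
    (u : (Fin n → ℝ) → ℝ) (hu : ContDiffOn ℝ (⊤ : ℕ∞) u U)
    (x : Fin n → ℝ) (hx : x ∈ U) (hDu : grad u x ≠ 0)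
    (heq : (hess u x).trace
      + (p - 2) * (∑ i, grad u x i * (hess u x).mulVec (grad u x) i)
          / ((∑ i, grad u x i ^ 2) + ε) = 0) :
    (∑ i, ∑ j, hess u x i j ^ 2) ≥
        2 * (∑ i, ((hess u x).mulVec (grad u x) i) ^ 2) / (∑ i, grad u x i ^ 2)
          + ((p - 1) ^ 2 / ((n : ℝ) - 1) - 1
              - (ε / ((∑ i, grad u x i ^ 2) + ε)) * (2 * (p - 1) * (p - 2) / ((n : ℝ) - 1))
              + (ε ^ 2 / ((∑ i, grad u x i ^ 2) + ε) ^ 2) * ((p - 2) ^ 2 / ((n : ℝ) - 1)))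
            * (∑ i, grad u x i * (hess u x).mulVec (grad u x) i) ^ 2
            / (∑ i, grad u x i ^ 2) ^ 2
      ∧ (n = 2 →
        (∑ i, ∑ j, hess u x i j ^ 2) =
          2 * (∑ i, ((hess u x).mulVec (grad u x) i) ^ 2) / (∑ i, grad u x i ^ 2)
            + ((p - 1) ^ 2 / ((n : ℝ) - 1) - 1
                - (ε / ((∑ i, grad u x i ^ 2) + ε)) * (2 * (p - 1) * (p - 2) / ((n : ℝ) - 1))
                + (ε ^ 2 / ((∑ i, grad u x i ^ 2) + ε) ^ 2) * ((p - 2) ^ 2 / ((n : ℝ) - 1)))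
              * (∑ i, grad u x i * (hess u x).mulVec (grad u x) i) ^ 2
              / (∑ i, grad u x i ^ 2) ^ 2) := by
  have hA := hess_symm ((hu.contDiffAt (hU.mem_nhds hx)).of_le
    (WithTop.coe_le_coe.mpr (le_top : (2 : ℕ∞) ≤ ⊤)))
  have hG : 0 < ∑ i, grad u x i ^ 2 := by
    obtain ⟨i, hi⟩ := Function.ne_iff.mp hDu
    exact Finset.sum_pos' (fun _ _ => sq_nonneg _) ⟨i, Finset.mem_univ i, sq_pos_of_ne_zero hi⟩
  have hm : (n : ℝ) - 1 ≠ 0 := by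
    have : (2 : ℝ) ≤ n := by exact_mod_cast hn
    linarith
  have hG2 : 0 < (∑ i, grad u x i ^ 2) ^ 2 := by positivity
  have key := rhs_eq (N := ∑ i, ∑ j, hess u x i j ^ 2)
    (L := ∑ i, ((hess u x).mulVec (grad u x) i) ^ 2) hm hG hε heq
  refine ⟨?_, ?_⟩
  · have hb := trace_sq_bound (hess u x) hA (grad u x) hn hG
    exact sub_nonneg.mp (nonneg_of_mul_nonneg_right (by linarith) hG2)
  · rintro rfl
    have hb := trace_sq_eq (hess u x) hA (grad u x)
    have h1 : ((2 : ℕ) : ℝ) - 1 = 1 := by norm_num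
    refine sub_eq_zero.mp ((mul_eq_zero.mp (key.trans ?_)).resolve_left hG2.ne')
    rw [h1, div_one]
    linarith
end
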